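/- Let Ω ⊂ ℝ² be a bounded, open, connected set with Lipschitz boundary and let u ∈ W^{1,1}(Ω;S¹). Then there exists a sequence of pairs ((x_i,y_i))_{i∈ℕ} of points of cl(Ω) with x_i ≠ y_i, for each i at least one of x_i, y_i belonging to Ω, Σ_{i=1}^∞ d̄_Ω(x_i,y_i) < +∞, and such that ⟨Det(∇u),φ⟩ = π Σ_{i=1}^∞ (φ(x_i) − φ(y_i)) for every φ ∈ Lip₀(Ω) (the series being absolutely convergent). -/

import Mathlib

open MeasureTheory Metric Filter Set
open scoped ENNReal NNReal Topology Classical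

noncomputable section

abbrev R2 := EuclideanSpace ℝ (Fin 2)

/-- `Ω ⊂ ℝ²` has Lipschitz boundary: near every boundary point, after a rigid motion,
`Ω` coincides with the open region strictly above the graph of a Lipschitz function. -/
def HasLipschitzBoundary (Ω : Set R2) : Prop :=
  ∀ p ∈ frontier Ω, ∃ r : ℝ, 0 < r ∧ ∃ (f : R2 ≃ᵢ R2) (γ : ℝ → ℝ) (L : ℝ≥0),
    LipschitzWith L γ ∧ ∀ x ∈ Metric.ball p r, (x ∈ Ω ↔ γ (f x 0) < f x 1)

/-- `G` is the weak (distributional) gradient of `u` on `Ω`: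
`∫_Ω u_i ∂_j φ = -∫_Ω G_{ij} φ` for all test functions `φ ∈ C_c^∞(Ω)`. -/
def IsWeakGradient (Ω : Set R2) (u : R2 → R2) (G : R2 → Matrix (Fin 2) (Fin 2) ℝ) : Prop :=
  ∀ φ : R2 → ℝ, ContDiff ℝ (⊤ : ℕ∞) φ → HasCompactSupport φ → tsupport φ ⊆ Ω →
    ∀ i j : Fin 2,
      (∫ x in Ω, u x i * fderiv ℝ φ x (EuclideanSpace.single j 1)) =
        - ∫ x in Ω, G x i j * φ x

/-- `u ∈ W^{1,1}(Ω;ℝ²)` with weak gradient `G`. -/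
def MemW11 (Ω : Set R2) (u : R2 → R2) (G : R2 → Matrix (Fin 2) (Fin 2) ℝ) : Prop :=
  IntegrableOn u Ω ∧ (∀ i j : Fin 2, IntegrableOn (fun x => G x i j) Ω) ∧
    IsWeakGradient Ω u G

/-- `|u| = 1` a.e. in `Ω`. -/
def SphereValued (Ω : Set R2) (u : R2 → R2) : Prop :=
  ∀ᵐ x ∂(volume.restrict Ω), ‖u x‖ = 1

/-- Frobenius norm of a `2×2` matrix. -/
def frob (M : Matrix (Fin 2) (Fin 2) ℝ) : ℝ :=
  Real.sqrt (∑ i, ∑ j, (M i j) ^ 2)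

/-- Jacobian matrix of a map `v : ℝ² → ℝ²`. -/
def jacobianMatrix (v : R2 → R2) (x : R2) : Matrix (Fin 2) (Fin 2) ℝ :=
  Matrix.of fun i j => fderiv ℝ v x (EuclideanSpace.single j 1) i

/-- Classical graph area `A(v,A) = ∫_A √(1 + |∇v|² + (Jv)²)` of a `C¹` map. -/
def classicalArea (A : Set R2) (v : R2 → R2) : ℝ≥0∞ :=
  ∫⁻ x in A, ENNReal.ofReal
    (Real.sqrt (1 + (∑ i, ∑ j, (jacobianMatrix v x i j) ^ 2) + (jacobianMatrix v x).det ^ 2))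

/-- `L¹`-relaxed area functional `𝒜(u,A)`. -/
def relaxedArea (u : R2 → R2) (A : Set R2) : ℝ≥0∞ :=
  sInf { a : ℝ≥0∞ | ∃ v : ℕ → R2 → R2,
    (∀ k, ContDiffOn ℝ 1 (v k) A) ∧
    (∀ k, IntegrableOn (fun x => v k x - u x) A) ∧
    Tendsto (fun k => ∫ x in A, ‖v k x - u x‖) atTop (nhds 0) ∧
    a = Filter.liminf (fun k => classicalArea A (v k)) atTop }

/-- `λ_u = (1/2)(u₁ ∇^⊥u₂ − u₂ ∇^⊥u₁)`, computed from the weak gradient `G`. -/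
def lambdaVec (u : R2 → R2) (G : R2 → Matrix (Fin 2) (Fin 2) ℝ) (x : R2) : Fin 2 → ℝ :=
  ![ (1 / 2) * (-(u x 0) * G x 1 1 + u x 1 * G x 0 1),
     (1 / 2) * (u x 0 * G x 1 0 - u x 1 * G x 0 0) ]

/-- Distributional Jacobian pairing `⟨Det(∇u), φ⟩ = ∫_Ω λ_u · ∇φ`. -/
def detPairing (Ω : Set R2) (u : R2 → R2) (G : R2 → Matrix (Fin 2) (Fin 2) ℝ)
    (φ : R2 → ℝ) : ℝ :=
  ∫ x in Ω, ∑ j, lambdaVec u G x j * fderiv ℝ φ x (EuclideanSpace.single j 1)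

/-- `φ ∈ Lip₀(Ω)`: Lipschitz on `cl(Ω)` and vanishing on `∂Ω`. -/
def MemLip0 (Ω : Set R2) (φ : R2 → ℝ) : Prop :=
  (∃ L : ℝ≥0, LipschitzOnWith L φ (closure Ω)) ∧ ∀ p ∈ frontier Ω, φ p = 0

/-- Admissible test functions for the flat norm: Lipschitz constant `≤ L` on `cl(Ω)`,
vanishing on `Z`, and bounded by `1` on `cl(Ω)`. -/
def FlatAdmissible (Ω Z : Set R2) (L : ℝ≥0) (φ : R2 → ℝ) : Prop :=
  LipschitzOnWith L φ (closure Ω) ∧ (∀ p ∈ Z, φ p = 0) ∧ ∀ p ∈ closure Ω, |φ p| ≤ 1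

/-- Flat norm of a functional `F`, with vanishing condition on the set `Z`. -/
def flatNormOn (Ω Z : Set R2) (L : ℝ≥0) (F : (R2 → ℝ) → ℝ) : ℝ≥0∞ :=
  ⨆ φ ∈ {φ : R2 → ℝ | FlatAdmissible Ω Z L φ}, ENNReal.ofReal (F φ)

/-- Flat norm of a functional `F` on `Lip₀(Ω)`; `L = 2` gives `‖·‖_{flat,α}` (α = 1/2),
`L = 1` gives `‖·‖_flat`. -/
def flatNorm (Ω : Set R2) (L : ℝ≥0) (F : (R2 → ℝ) → ℝ) : ℝ≥0∞ :=
  flatNormOn Ω (frontier Ω) L F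

/-- `d̄_Ω(x,y) = min{|x−y|, dist(x,∂Ω) + dist(y,∂Ω)}`. -/
def dbar (Ω : Set R2) (x y : R2) : ℝ :=
  min (dist x y) (Metric.infDist x (frontier Ω) + Metric.infDist y (frontier Ω))

/-- Countably subadditive interior envelope `𝒜**(u,V)` (relative to `Ω`). -/
def envA (u : R2 → R2) (Ω V : Set R2) : ℝ≥0∞ :=
  sInf { a : ℝ≥0∞ | ∃ A : ℕ → Set R2,
    (∀ k, IsOpen (A k) ∧ A k ⊆ Ω) ∧ V ⊆ ⋃ k, A k ∧ a = ∑' k, relaxedArea u (A k) }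

/-- Property `(P_f)` for a finite family of pairs of points of `cl(Ω)`. -/
def SatisfiesPf (Ω : Set R2) {n : ℕ} (x y : Fin n → R2) : Prop :=
  (∀ k, (x k ∈ Ω ∧ y k ∈ frontier Ω ∧ dist (x k) (y k) = Metric.infDist (x k) (frontier Ω)) ∨
        (y k ∈ Ω ∧ x k ∈ frontier Ω ∧ dist (x k) (y k) = Metric.infDist (y k) (frontier Ω))) ∧
  ∀ i j, x i ∈ Ω → y j ∈ Ω → x i ≠ y j

/-- The points of the family `x, y` lying in `Ω` are distinct and three by three
not collinear. -/
def InteriorPointsGeneric (Ω : Set R2) {n : ℕ} (x y : Fin n → R2) : Prop :=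
  (∀ a b : Fin n ⊕ Fin n, Sum.elim x y a ∈ Ω → Sum.elim x y b ∈ Ω → a ≠ b →
    Sum.elim x y a ≠ Sum.elim x y b) ∧
  ∀ a b c : Fin n ⊕ Fin n, Sum.elim x y a ∈ Ω → Sum.elim x y b ∈ Ω → Sum.elim x y c ∈ Ω →
    a ≠ b → a ≠ c → b ≠ c →
    ¬ Collinear ℝ ({Sum.elim x y a, Sum.elim x y b, Sum.elim x y c} : Set R2)

/-- `ι(w₁,w₂) = (w₁,−w₂)`. -/
def conjPt (w : R2) : R2 := (WithLp.equiv 2 (Fin 2 → ℝ)).symm ![w 0, -(w 1)]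

/-- `u` is a (positive/negative) vortex around the points of the family lying in `Ω`:
the closed discs of radii `ρ` are contained in `Ω` and pairwise disjoint,
`u(z) = (z−x_i)/|z−x_i|` on `B_{ρ}(x_i)` and `u(z) = ι((z−y_j)/|z−y_j|)` on `B_{ρ}(y_j)`. -/
def VortexAt (Ω : Set R2) (u : R2 → R2) {n : ℕ} (x y : Fin n → R2)
    (ρ : Fin n ⊕ Fin n → ℝ) : Prop :=
  (∀ a, Sum.elim x y a ∈ Ω → Metric.closedBall (Sum.elim x y a) (ρ a) ⊆ Ω) ∧
  (∀ a b, a ≠ b → Sum.elim x y a ∈ Ω → Sum.elim x y b ∈ Ω →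
    Disjoint (Metric.closedBall (Sum.elim x y a) (ρ a))
      (Metric.closedBall (Sum.elim x y b) (ρ b))) ∧
  (∀ i, x i ∈ Ω → ∀ᵐ z ∂(volume.restrict (Metric.ball (x i) (ρ (Sum.inl i)))),
    u z = ‖z - x i‖⁻¹ • (z - x i)) ∧
  (∀ i, y i ∈ Ω → ∀ᵐ z ∂(volume.restrict (Metric.ball (y i) (ρ (Sum.inr i)))),
    u z = conjPt (‖z - y i‖⁻¹ • (z - y i)))

/-- The energy `E(I_P, I_D, τ)` of a partition `{I_Dᶜ, I_D}` of `I` and an injection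
`τ : I_D → I`. -/
def energy (Ω : Set R2) {n : ℕ} (x y : Fin n → R2) (ID : Finset (Fin n))
    (τ : Fin n → Fin n) : ℝ≥0∞ :=
  ((IDᶜ.filter fun k => x k ∈ Ω).card : ℝ≥0∞) +
  (((Finset.univ \ ID.image τ).filter fun j => y j ∈ Ω).card : ℝ≥0∞) +
  2 * ∑ k ∈ ID, μH[1] (segment ℝ (y (τ k)) (x k) ∩ Ω)

/-! ### Part A: finite Kantorovich duality -/

lemma finite_matching {X : Type*} (D : X → X → ℝ) (D0 : ∀ x, D x x = 0)
    (Dt : ∀ x y z, D x z ≤ D x y + D y z)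
    {n : ℕ} (hn : 0 < n) (a b : Fin n → X) :
    ∃ (σ : Fin n → Fin n) (φ : X → ℝ), Function.Bijective σ ∧ (∀ x y, φ x - φ y ≤ D x y) ∧
      ∑ i, D (a i) (b (σ i)) ≤ ∑ i, (φ (a i) - φ (b i)) := by
  classical
  have i0 : Fin n := ⟨0, hn⟩
  have : Nonempty (Fin n) := ⟨i0⟩
  -- inf-convolution
  have ext : ∀ (w : Fin n → ℝ), ∃ φ : X → ℝ, (∀ x y, φ x - φ y ≤ D x y) ∧
      (∀ x j, φ x ≤ w j + D x (b j)) ∧ (∀ x c, (∀ j, c ≤ w j + D x (b j)) → c ≤ φ x) := by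
    intro w
    refine ⟨fun x => Finset.univ.inf' Finset.univ_nonempty (fun j => w j + D x (b j)),
      ?_, ?_, ?_⟩
    · intro x y
      obtain ⟨j, -, hj⟩ := Finset.exists_mem_eq_inf' (Finset.univ_nonempty (α := Fin n))
        (fun j => w j + D y (b j))
      have h1 : Finset.univ.inf' Finset.univ_nonempty (fun j => w j + D x (b j))
          ≤ w j + D x (b j) := Finset.inf'_le _ (Finset.mem_univ j)
      have := Dt x y (b j)
      simp only [hj]
      linarith
    · intro x j
      exact Finset.inf'_le (fun j => w j + D x (b j)) (Finset.mem_univ j)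
    · intro x c hc
      exact Finset.le_inf' _ _ (fun j _ => hc j)
  let z : Fin n ⊕ Fin n → X := Sum.elim a b
  let K : Set (Fin n ⊕ Fin n → ℝ) :=
    {f | (∀ i j, f i - f j ≤ D (z i) (z j)) ∧ f (Sum.inl i0) = 0}
  let J : (Fin n ⊕ Fin n → ℝ) → ℝ := fun f => ∑ i, (f (Sum.inl i) - f (Sum.inr i))
  have Kcl : IsClosed K := by
    have : K = (⋂ i, ⋂ j, {f | f i - f j ≤ D (z i) (z j)}) ∩ {f | f (Sum.inl i0) = 0} := by
      ext f; simp [K]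
    rw [this]
    refine IsClosed.inter ?_ ?_
    · refine isClosed_iInter fun i => isClosed_iInter fun j => ?_
      exact isClosed_le (by fun_prop) (by fun_prop)
    · exact isClosed_eq (by fun_prop) (by fun_prop)
  have Kc : IsCompact K := by
    refine IsCompact.of_isClosed_subset (isCompact_univ_pi (fun i => isCompact_Icc
      (a := -D (z (Sum.inl i0)) (z i)) (b := D (z i) (z (Sum.inl i0))))) Kcl ?_
    intro f hf i _
    have h1 := hf.1 i (Sum.inl i0)
    have h2 := hf.1 (Sum.inl i0) i
    rw [hf.2] at h1 h2
    constructor <;> linarith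
  have Jc : Continuous J := by fun_prop
  have Kne : K.Nonempty := by
    refine ⟨fun i => D (z i) (z (Sum.inl i0)), ?_, D0 _⟩
    intro i j
    have := Dt (z i) (z j) (z (Sum.inl i0))
    linarith
  obtain ⟨f, hfK, hfmax⟩ := Kc.exists_isMaxOn Kne Jc.continuousOn
  let t : Fin n → Finset (Fin n) := fun i =>
    Finset.univ.filter (fun j => f (Sum.inl i) - f (Sum.inr j) = D (a i) (b j))
  have hall : ∀ s : Finset (Fin n), s.card ≤ (s.biUnion t).card := by
    intro S
    by_contra hlt
    push Not at hlt
    set NS := S.biUnion t with hNS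
    have gap : ∃ τ : ℝ, 0 < τ ∧ ∀ i ∈ S, ∀ j ∉ NS,
        f (Sum.inl i) - f (Sum.inr j) + τ ≤ D (a i) (b j) := by
      have : ∀ p : Fin n × Fin n, ∃ τ : ℝ, 0 < τ ∧ (p.1 ∈ S → p.2 ∉ NS →
          f (Sum.inl p.1) - f (Sum.inr p.2) + τ ≤ D (a p.1) (b p.2)) := by
        rintro ⟨i, j⟩
        by_cases hi : i ∈ S ∧ j ∉ NS
        · refine ⟨D (a i) (b j) - (f (Sum.inl i) - f (Sum.inr j)), ?_, ?_⟩
          · have h1 := hfK.1 (Sum.inl i) (Sum.inr j)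
            have h2 : f (Sum.inl i) - f (Sum.inr j) ≠ D (a i) (b j) := by
              intro h
              apply hi.2
              rw [hNS, Finset.mem_biUnion]
              exact ⟨i, hi.1, by simp [t, h]⟩
            have h3 := lt_of_le_of_ne h1 h2
            simp only [z, Sum.elim_inl, Sum.elim_inr] at h3
            linarith
          · intro _ _
            simp
        · exact ⟨1, one_pos, fun h1 h2 => absurd ⟨h1, h2⟩ hi⟩
      choose τ hτ1 hτ2 using this
      refine ⟨Finset.univ.inf' Finset.univ_nonempty τ, ?_, ?_⟩
      · rw [Finset.lt_inf'_iff]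
        exact fun p _ => hτ1 p
      · intro i hi j hj
        have h1 := hτ2 (i, j) hi hj
        have h2 : Finset.univ.inf' Finset.univ_nonempty τ ≤ τ (i, j) :=
          Finset.inf'_le _ (Finset.mem_univ _)
        simp only at h1
        linarith
    obtain ⟨τ, hτ, hgap⟩ := gap
    obtain ⟨φ, hφ1, hφ2, hφ3⟩ := ext (fun j => f (Sum.inr j) + if j ∈ NS then τ else 0)
    let f' : Fin n ⊕ Fin n → ℝ := fun i => φ (z i) - φ (z (Sum.inl i0))
    have hf'K : f' ∈ K := by
      refine ⟨fun i j => ?_, by simp [f']⟩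
      have := hφ1 (z i) (z j)
      simp only [f']
      linarith
    have hJ : J f' ≤ J f := hfmax hf'K
    have hJ1 : J f' = ∑ i, (φ (a i) - φ (b i)) := by
      simp only [J, f', z, Sum.elim_inl, Sum.elim_inr]
      refine Finset.sum_congr rfl fun i _ => by ring
    have hl : ∀ i, f (Sum.inl i) + (if i ∈ S then τ else 0) ≤ φ (a i) := by
      intro i
      apply hφ3
      intro j
      have h1 := hfK.1 (Sum.inl i) (Sum.inr j)
      simp only [z, Sum.elim_inl, Sum.elim_inr] at h1
      by_cases hi : i ∈ S
      · by_cases hj : j ∈ NS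
        · simp only [hi, hj, if_true]; linarith
        · simp only [hi, hj, if_true, if_false]
          have := hgap i hi j hj
          linarith
      · have : 0 ≤ (if j ∈ NS then τ else 0) := by split_ifs <;> linarith
        simp only [hi, if_false]
        linarith
    have hr : ∀ j, φ (b j) ≤ f (Sum.inr j) + (if j ∈ NS then τ else 0) := by
      intro j
      have := hφ2 (b j) j
      rw [D0] at this
      linarith
    have hsum : J f + (S.card * τ - NS.card * τ) ≤ J f' := by
      rw [hJ1]
      calc J f + (S.card * τ - NS.card * τ)
          = ∑ i, ((f (Sum.inl i) + (if i ∈ S then τ else 0)) -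
              (f (Sum.inr i) + (if i ∈ NS then τ else 0))) := by
            simp only [J, Finset.sum_sub_distrib, Finset.sum_add_distrib, Finset.sum_ite_mem,
              Finset.univ_inter, Finset.sum_const, nsmul_eq_mul]
            ring
        _ ≤ _ := Finset.sum_le_sum fun i _ => by linarith [hl i, hr i]
    have : (NS.card : ℝ) < S.card := by exact_mod_cast hlt
    nlinarith
  obtain ⟨σ, hσi, hσ⟩ := (Finset.all_card_le_biUnion_card_iff_exists_injective t).1 hall
  have hσb : Function.Bijective σ := Finite.injective_iff_bijective.1 hσi
  obtain ⟨φ, hφ1, hφ2, hφ3⟩ := ext (fun j => f (Sum.inr j))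
  refine ⟨σ, φ, hσb, hφ1, ?_⟩
  have h1 : ∑ i, D (a i) (b (σ i)) = ∑ i, (f (Sum.inl i) - f (Sum.inr (σ i))) := by
    refine Finset.sum_congr rfl fun i _ => ?_
    have := hσ i
    simp only [t, Finset.mem_filter, Finset.mem_univ, true_and] at this
    exact this.symm
  have h2 : ∑ i, f (Sum.inr (σ i)) = ∑ i, f (Sum.inr i) :=
    hσb.sum_comp (fun i => f (Sum.inr i))
  rw [h1, Finset.sum_sub_distrib, h2, ← Finset.sum_sub_distrib]
  refine Finset.sum_le_sum fun i _ => ?_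
  have h3 : f (Sum.inl i) ≤ φ (a i) := by
    apply hφ3
    intro j
    have h1 := hfK.1 (Sum.inl i) (Sum.inr j)
    simp only [z, Sum.elim_inl, Sum.elim_inr] at h1
    linarith
  have h4 := hφ2 (b i) i
  rw [D0] at h4
  linarith

/-! ### Part B: assembling the dipoles -/

lemma dbar_nonneg (Ω : Set R2) (x y : R2) : 0 ≤ dbar Ω x y :=
  le_min dist_nonneg (add_nonneg infDist_nonneg infDist_nonneg)

lemma dbar_self (Ω : Set R2) (x : R2) : dbar Ω x x = 0 := by
  unfold dbar
  rw [dist_self]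
  exact min_eq_left (add_nonneg infDist_nonneg infDist_nonneg)

lemma dbar_triangle (Ω : Set R2) (x y z : R2) :
    dbar Ω x z ≤ dbar Ω x y + dbar Ω y z := by
  have h1 := dist_triangle x y z
  have h2 : infDist x (frontier Ω) ≤ infDist y (frontier Ω) + dist x y :=
    infDist_le_infDist_add_dist
  have h3 : infDist z (frontier Ω) ≤ infDist y (frontier Ω) + dist z y :=
    infDist_le_infDist_add_dist
  rw [dist_comm z y] at h3
  have h4 : 0 ≤ infDist y (frontier Ω) := infDist_nonneg
  have h5 : 0 ≤ infDist x (frontier Ω) := infDist_nonneg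
  have h6 : 0 ≤ infDist z (frontier Ω) := infDist_nonneg
  unfold dbar
  rcases min_cases (dist x y) (infDist x (frontier Ω) + infDist y (frontier Ω)) with h | h <;>
  rcases min_cases (dist y z) (infDist y (frontier Ω) + infDist z (frontier Ω)) with h' | h' <;>
  rw [h.1, h'.1] <;>
  first
  | exact (min_le_left _ _).trans (by linarith)
  | exact (min_le_right _ _).trans (by linarith)

lemma lip0_le_dbar {Ω : Set R2} (hb : Bornology.IsBounded Ω) (hne : (frontier Ω).Nonempty)
    {φ : R2 → ℝ} {L : ℝ≥0}
    (hL : LipschitzOnWith L φ (closure Ω)) (h0 : ∀ p ∈ frontier Ω, φ p = 0)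
    {x y : R2} (hx : x ∈ closure Ω) (hy : y ∈ closure Ω) :
    |φ x - φ y| ≤ L * dbar Ω x y := by
  have hcomp : IsCompact (frontier Ω) :=
    hb.isCompact_closure.of_isClosed_subset isClosed_frontier frontier_subset_closure
  have key : ∀ x ∈ closure Ω, |φ x| ≤ L * infDist x (frontier Ω) := by
    intro x hx
    obtain ⟨p, hp, hd⟩ := hcomp.exists_infDist_eq_dist hne x
    have := hL.dist_le_mul x hx p (frontier_subset_closure hp)
    rwa [h0 p hp, Real.dist_eq, sub_zero, ← hd] at this
  unfold dbar
  rcases min_cases (dist x y) (infDist x (frontier Ω) + infDist y (frontier Ω)) with h | h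
  · rw [h.1, ← Real.dist_eq]
    exact hL.dist_le_mul x hx y hy
  · rw [h.1]
    have := abs_sub (φ x) (φ y)
    have := key x hx
    have := key y hy
    linarith

lemma list_fin {X : Type*} (l : List X) {n : ℕ} (h : l.length = n) :
    ∃ b : Fin n → X, (∀ i, b i ∈ l) ∧ ∀ φ : X → ℝ, ∑ i, φ (b i) = (l.map φ).sum := by
  subst h
  refine ⟨fun i => l[i], fun i => by simp, fun φ => ?_⟩
  exact Fin.sum_univ_fun_getElem l φ

lemma exists_dipoles {Ω : Set R2} (ho : IsOpen Ω) (hne : Ω.Nonempty)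
    {p0 : R2} (hp0 : p0 ∈ frontier Ω) (A B : List R2) (hA : ∀ x ∈ A, x ∈ Ω)
    (hB : ∀ x ∈ B, x ∈ Ω) (κ : ℝ) (hκ : 0 < κ) :
    ∃ (ι : Type) (_ : Fintype ι) (_ : Nonempty ι) (x y : ι → R2),
      (∀ i, x i ∈ closure Ω ∧ y i ∈ closure Ω ∧ x i ≠ y i ∧ (x i ∈ Ω ∨ y i ∈ Ω)) ∧
      (∀ η : ℝ, (∀ φ : R2 → ℝ, LipschitzWith 1 φ → (∀ p ∈ frontier Ω, φ p = 0) →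
        (A.map φ).sum - (B.map φ).sum ≤ η) → ∑ i, dbar Ω (x i) (y i) ≤ η + κ) ∧
      ∀ φ : R2 → ℝ, (∀ p ∈ frontier Ω, φ p = 0) →
        ∑ i, (φ (x i) - φ (y i)) = (A.map φ).sum - (B.map φ).sum := by
  classical
  -- pad with boundary points
  obtain ⟨a, ha, haφ⟩ := list_fin (A ++ List.replicate (B.length + 1) p0)
    (n := A.length + B.length + 1) (by simp; ring)
  obtain ⟨b, hb, hbφ⟩ := list_fin (B ++ List.replicate (A.length + 1) p0)
    (n := A.length + B.length + 1) (by simp; ring)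
  have ha' : ∀ i, a i ∈ Ω ∨ a i = p0 := by
    intro i
    have := ha i
    rw [List.mem_append] at this
    rcases this with h | h
    · exact Or.inl (hA _ h)
    · exact Or.inr (List.eq_of_mem_replicate h)
  have hb' : ∀ i, b i ∈ Ω ∨ b i = p0 := by
    intro i
    have := hb i
    rw [List.mem_append] at this
    rcases this with h | h
    · exact Or.inl (hB _ h)
    · exact Or.inr (List.eq_of_mem_replicate h)
  have hcl : ∀ z, z ∈ Ω ∨ z = p0 → z ∈ closure Ω := by
    rintro z (h | h)
    · exact subset_closure h
    · rw [h]; exact frontier_subset_closure hp0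
  obtain ⟨σ, ψ, hσ, hψ, hsum⟩ := finite_matching (dbar Ω) (dbar_self Ω)
    (dbar_triangle Ω) (Nat.succ_pos _) a b
  -- filler
  obtain ⟨p, q, hp, hq, hpq, hd⟩ : ∃ p q : R2, p ∈ Ω ∧ q ∈ Ω ∧ p ≠ q ∧ dist p q ≤ κ / 2 := by
    obtain ⟨p, hp⟩ := hne
    have hn : Ω ∩ ball p (κ / 2) ∈ 𝓝 p := inter_mem (ho.mem_nhds hp) (ball_mem_nhds _ (by linarith))
    have : (𝓝[≠] p).NeBot := inferInstance
    obtain ⟨q, hq⟩ := this.nonempty_of_mem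
      (inter_mem (mem_nhdsWithin_of_mem_nhds hn) self_mem_nhdsWithin)
    refine ⟨p, q, hp, hq.1.1, Ne.symm hq.2, ?_⟩
    have := hq.1.2
    rw [mem_ball, dist_comm] at this
    exact this.le
  let good : Fin (A.length + B.length + 1) → Prop := fun i =>
    a i ≠ b (σ i) ∧ (a i ∈ Ω ∨ b (σ i) ∈ Ω)
  have hbad : ∀ i, ¬ good i → a i = b (σ i) := by
    intro i hi
    by_contra h
    simp only [good, not_and, not_or] at hi
    have h' := hi h
    exact h (((ha' i).resolve_left h'.1).trans ((hb' _).resolve_left h'.2).symm)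
  have hsplit : ∀ F : R2 → R2 → ℝ, (∀ z, F z z = 0) →
      ∑ i : {i // good i}, F (a i) (b (σ i)) = ∑ i, F (a i) (b (σ i)) := by
    intro F hF
    rw [← Finset.sum_subtype (Finset.univ.filter good) (by simp) (fun i => F (a i) (b (σ i)))]
    refine Finset.sum_filter_of_ne fun i _ hi => ?_
    by_contra h
    exact hi (by simp only [hbad i h, hF])
  refine ⟨{i // good i} ⊕ Bool, inferInstance, inferInstance,
    Sum.elim (fun i => a i) (fun c => if c then p else q),
    Sum.elim (fun i => b (σ i)) (fun c => if c then q else p), ?_, ?_, ?_⟩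
  · rintro (i | c)
    · exact ⟨hcl _ (ha' _), hcl _ (hb' _), i.2.1, i.2.2⟩
    · cases c
      · exact ⟨subset_closure hq, subset_closure hp, hpq.symm, Or.inl hq⟩
      · exact ⟨subset_closure hp, subset_closure hq, hpq, Or.inl hp⟩
  · intro η hη
    rw [Fintype.sum_sum_type]
    simp only [Sum.elim_inl, Sum.elim_inr, Fintype.sum_bool, if_true]
    rw [hsplit (dbar Ω) (dbar_self Ω)]
    have h1 : dbar Ω p q ≤ κ / 2 := (min_le_left _ _).trans hd
    have h2 : dbar Ω q p ≤ κ / 2 := (min_le_left _ _).trans (by rwa [dist_comm])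
    have hψ0 : ∀ r ∈ frontier Ω, ψ r = ψ p0 := by
      intro r hr
      have e : ∀ s ∈ frontier Ω, ∀ t ∈ frontier Ω, dbar Ω s t ≤ 0 := by
        intro s hs t ht
        refine (min_le_right _ _).trans ?_
        rw [infDist_zero_of_mem hs, infDist_zero_of_mem ht, add_zero]
      have := (hψ r p0).trans (e r hr p0 hp0)
      have := (hψ p0 r).trans (e p0 hp0 r hr)
      linarith
    have hle : ∑ i, (ψ (a i) - ψ (b i)) ≤ η := by
      have := hη (fun z => ψ z - ψ p0) ?_ ?_
      · have e1 := haφ (fun z => ψ z - ψ p0)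
        have e2 := hbφ (fun z => ψ z - ψ p0)
        simp only [List.map_append, List.sum_append, List.map_replicate, sub_self,
          List.sum_replicate, smul_zero, add_zero] at e1 e2
        rw [← e1, ← e2, ← Finset.sum_sub_distrib] at this
        simpa using this
      · refine LipschitzWith.of_dist_le_mul fun z w => ?_
        rw [Real.dist_eq, abs_le]
        have := (hψ z w).trans (min_le_left _ _)
        have := (hψ w z).trans (min_le_left _ _)
        rw [dist_comm] at this
        simp only [NNReal.coe_one, one_mul]
        constructor <;> linarith
      · intro r hr
        simp [hψ0 r hr]
    simp only [Bool.false_eq_true, if_false]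
    linarith
  · intro φ hφ
    rw [Fintype.sum_sum_type]
    simp only [Sum.elim_inl, Sum.elim_inr, Fintype.sum_bool, if_true, Bool.false_eq_true, if_false]
    rw [hsplit (fun z w => φ z - φ w) (fun z => sub_self _)]
    rw [Finset.sum_sub_distrib, hσ.sum_comp (fun i => φ (b i)), haφ, hbφ]
    simp [hφ p0 hp0]

theorem assemble {Ω : Set R2} (ho : IsOpen Ω) (hb : Bornology.IsBounded Ω) (hne : Ω.Nonempty)
    (T : (R2 → ℝ) → ℝ)
    (hT : ∀ η : ℝ, 0 < η → ∃ A B : List R2, (∀ x ∈ A, x ∈ Ω) ∧ (∀ x ∈ B, x ∈ Ω) ∧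
      ∀ (φ : R2 → ℝ) (L : ℝ≥0), LipschitzOnWith L φ (closure Ω) →
        (∀ p ∈ frontier Ω, φ p = 0) →
        |T φ - Real.pi * ((A.map φ).sum - (B.map φ).sum)| ≤ η * L) :
    ∃ x y : ℕ → R2,
      (∀ i, x i ∈ closure Ω ∧ y i ∈ closure Ω ∧ x i ≠ y i ∧ (x i ∈ Ω ∨ y i ∈ Ω)) ∧
      Summable (fun i => dbar Ω (x i) (y i)) ∧
      ∀ φ : R2 → ℝ, MemLip0 Ω φ →
        Summable (fun i => |φ (x i) - φ (y i)|) ∧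
        T φ = Real.pi * ∑' i, (φ (x i) - φ (y i)) := by
  obtain ⟨p0, hp0⟩ : (frontier Ω).Nonempty := by
    rw [nonempty_frontier_iff]
    refine ⟨hne, ?_⟩
    rintro rfl
    exact NormedSpace.unbounded_univ ℝ R2 hb
  choose A B hA hB hAB using fun n : ℕ => hT ((1 / 2) ^ n) (by positivity)
  let A' : ℕ → List R2 := fun n => Nat.casesOn n (A 0) (fun m => A (m + 1) ++ B m)
  let B' : ℕ → List R2 := fun n => Nat.casesOn n (B 0) (fun m => B (m + 1) ++ A m)
  have hA' : ∀ n, ∀ x ∈ A' n, x ∈ Ω := by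
    intro n x hx
    cases n with
    | zero => exact hA 0 x hx
    | succ m => exact (List.mem_append.1 hx).elim (hA _ x) (hB _ x)
  have hB' : ∀ n, ∀ x ∈ B' n, x ∈ Ω := by
    intro n x hx
    cases n with
    | zero => exact hB 0 x hx
    | succ m => exact (List.mem_append.1 hx).elim (hB _ x) (hA _ x)
  let F : ℕ → (R2 → ℝ) → ℝ := fun n φ => ((A n).map φ).sum - ((B n).map φ).sum
  have hF0 : ∀ φ, ((A' 0).map φ).sum - ((B' 0).map φ).sum = F 0 φ := fun φ => rfl
  have hFs : ∀ m φ, ((A' (m + 1)).map φ).sum - ((B' (m + 1)).map φ).sum = F (m + 1) φ - F m φ := by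
    intro m φ
    simp only [A', B', F, List.map_append, List.sum_append]
    ring
  choose ι fι nι x y hgood hbd hφs using fun n : ℕ =>
    exists_dipoles ho hne hp0 (A' n) (B' n) (hA' n) (hB' n) ((1 / 2) ^ n) (by positivity)
  have hsb : ∀ m, ∑ i, dbar Ω (x (m + 1) i) (y (m + 1) i) ≤ 3 * (1 / 2) ^ m := by
    intro m
    refine (hbd (m + 1) (2 * (1 / 2) ^ m) ?_).trans ?_
    · intro φ hφ h0
      rw [hFs]
      have e1 := hAB (m + 1) φ 1 hφ.lipschitzOnWith h0
      have e2 := hAB m φ 1 hφ.lipschitzOnWith h0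
      simp only [NNReal.coe_one, mul_one] at e1 e2
      rw [abs_le] at e1 e2
      have hp := Real.pi_gt_three
      have e3 : Real.pi * (F (m + 1) φ - F m φ) ≤ 2 * (1 / 2) ^ m := by
        have : ((1 : ℝ) / 2) ^ (m + 1) ≤ (1 / 2) ^ m :=
          pow_le_pow_of_le_one (by norm_num) (by norm_num) (Nat.le_succ m)
        simp only [F, mul_sub] at e1 e2 ⊢
        linarith [e1.1, e2.2]
      by_contra hc
      push Not at hc
      have : (0 : ℝ) < 2 * (1 / 2) ^ m := by positivity
      nlinarith
    · have : ((1 : ℝ) / 2) ^ (m + 1) ≤ (1 / 2) ^ m :=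
        pow_le_pow_of_le_one (by norm_num) (by norm_num) (Nat.le_succ m)
      linarith
  let I := Σ n, ι n
  let X : I → R2 := fun i => x i.1 i.2
  let Y : I → R2 := fun i => y i.1 i.2
  have hsI : Summable (fun i : I => dbar Ω (X i) (Y i)) := by
    rw [summable_sigma_of_nonneg (fun _ => dbar_nonneg _ _ _)]
    refine ⟨fun n => Summable.of_finite, ?_⟩
    simp only [tsum_fintype]
    rw [← summable_nat_add_iff 1]
    refine Summable.of_nonneg_of_le (fun m => Finset.sum_nonneg fun i _ => dbar_nonneg _ _ _)
      hsb ?_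
    exact (summable_geometric_two).mul_left 3
  have : Infinite I := Infinite.of_injective (fun n : ℕ => (⟨n, (nι n).some⟩ : I))
    (fun n m h => congrArg Sigma.fst h)
  have : Countable I := inferInstance
  obtain ⟨e⟩ : Nonempty (ℕ ≃ I) := by
    obtain ⟨d⟩ := nonempty_denumerable I
    exact ⟨(Denumerable.eqv I).symm⟩
  refine ⟨X ∘ e, Y ∘ e, fun i => hgood _ _, ?_, ?_⟩
  · exact (e.summable_iff (f := fun i : I => dbar Ω (X i) (Y i))).2 hsI
  · rintro φ ⟨⟨L, hL⟩, h0⟩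
    have habs : Summable (fun i : I => |φ (X i) - φ (Y i)|) := by
      refine Summable.of_nonneg_of_le (fun i => abs_nonneg _) (fun i => ?_) (hsI.mul_left (L : ℝ))
      exact lip0_le_dbar hb ⟨p0, hp0⟩ hL h0 (hgood _ _).1 (hgood _ _).2.1
    refine ⟨(e.summable_iff (f := fun i : I => |φ (X i) - φ (Y i)|)).2 habs, ?_⟩
    have hs : Summable (fun i : I => φ (X i) - φ (Y i)) := habs.of_abs
    have h1 : ∑' i, (φ ((X ∘ e) i) - φ ((Y ∘ e) i)) = ∑' i : I, (φ (X i) - φ (Y i)) :=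
      e.tsum_eq (fun i : I => φ (X i) - φ (Y i))
    rw [h1, hs.tsum_sigma]
    have h2 : Summable (fun n => ∑' i : ι n, (φ (x n i) - φ (y n i))) := hs.sigma
    have h3 : ∀ n, ∑' i : ι n, (φ (x n i) - φ (y n i)) =
        ((A' n).map φ).sum - ((B' n).map φ).sum := by
      intro n
      rw [tsum_fintype, hφs n φ h0]
    have h4 : ∀ N, ∑ n ∈ Finset.range (N + 1), ∑' i : ι n, (φ (x n i) - φ (y n i)) = F N φ := by
      intro N
      induction N with
      | zero => rw [zero_add, Finset.sum_range_one, h3, hF0]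
      | succ N ih => rw [Finset.sum_range_succ, ih, h3, hFs]; ring
    have h5 := (tendsto_add_atTop_iff_nat 1).2 h2.hasSum.tendsto_sum_nat
    simp only [h4] at h5
    have h6 : Tendsto (fun N => Real.pi * F N φ) atTop (𝓝 (T φ)) := by
      rw [tendsto_iff_dist_tendsto_zero]
      refine squeeze_zero (fun _ => dist_nonneg) (g := fun N => (1 / 2) ^ N * (L : ℝ)) ?_ ?_
      · intro N
        rw [dist_comm, Real.dist_eq]
        exact hAB N φ L hL h0
      · have := (tendsto_pow_atTop_nhds_zero_of_lt_one (r := (1 / 2 : ℝ)) (by norm_num)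
          (by norm_num)).mul_const (L : ℝ)
        simpa using this
    exact tendsto_nhds_unique h6 (h5.const_mul _)

/-! ### Part C: one-dimensional lemmas -/

lemma choose_shift (f : ℝ → ℝ≥0∞) (hf : AEMeasurable f) (ε : ℝ) (hε : 0 < ε) (c : ℝ) (N : ℕ)
    (P : ℝ → Prop) (hP : ∀ᵐ x, P x) :
    ∃ s ∈ Ioo 0 ε, (∀ k : ℕ, P (c + s + ε * k)) ∧
      (∑ k ∈ Finset.range N, f (c + s + ε * k)) * ENNReal.ofReal ε ≤ ∫⁻ x, f x := by
  have hmp : ∀ k : ℕ, MeasurePreserving (fun s : ℝ => (c + ε * k) + s) volume volume :=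
    fun k => measurePreserving_add_left volume _
  have e1 : ∀ (k : ℕ) (s : ℝ), c + s + ε * k = (c + ε * k) + s := fun k s => by ring
  simp only [e1]
  have hPk : ∀ k : ℕ, ∀ᵐ s : ℝ, P ((c + ε * k) + s) := fun k =>
    (hmp k).quasiMeasurePreserving.ae hP
  have hPa : ∀ᵐ s ∂(volume.restrict (Ioo 0 ε)), s ∈ Ioo 0 ε ∧ ∀ k : ℕ, P ((c + ε * k) + s) := by
    refine (ae_restrict_mem measurableSet_Ioo).and ?_
    exact ae_restrict_of_ae (ae_all_iff.2 hPk)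
  have hfk : ∀ k : ℕ, AEMeasurable (fun s => f ((c + ε * k) + s)) := fun k =>
    hf.comp_quasiMeasurePreserving (hmp k).quasiMeasurePreserving
  have hm0 : volume.restrict (Ioo 0 ε) ≠ 0 := by
    rw [Ne, Measure.restrict_eq_zero, Real.volume_Ioo]
    simp [hε]
  obtain ⟨s, hs, hle⟩ := exists_notMem_null_le_laverage (μ := volume.restrict (Ioo 0 ε))
    (f := fun s => ∑ k ∈ Finset.range N, f ((c + ε * k) + s)) hm0
    (Finset.aemeasurable_fun_sum _ fun k _ => (hfk k).restrict) (ae_iff.1 hPa)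
  simp only [Set.mem_ofPred_eq, not_not] at hs
  refine ⟨s, hs.1, hs.2, ?_⟩
  rw [laverage_eq, Measure.restrict_apply_univ, Real.volume_Ioo, sub_zero] at hle
  have h1 : ∫⁻ s in Ioo 0 ε, ∑ k ∈ Finset.range N, f ((c + ε * k) + s) ≤ ∫⁻ x, f x := by
    rw [lintegral_finsetSum' _ fun k _ => (hfk k).restrict]
    have h2 : ∀ k : ℕ, ∫⁻ s in Ioo 0 ε, f ((c + ε * k) + s) =
        ∫⁻ x in Ioo (c + ε * k) (c + ε * (k + 1)), f x := by
      intro k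
      have h3 := (hmp k).setLIntegral_comp_preimage_emb
        (MeasurableEquiv.addLeft _).measurableEmbedding f (Ioo (c + ε * k) (c + ε * (k + 1)))
      rw [← h3]
      congr 2
      ext s
      simp only [mem_Ioo, mem_preimage]
      constructor <;> rintro ⟨h1, h2⟩ <;> constructor <;> linarith
    simp only [h2]
    rw [← lintegral_biUnion_finset]
    · exact setLIntegral_le_lintegral _ _
    · intro i _ j _ hij
      rw [Function.onFun, Set.disjoint_left]
      intro z hz hz'
      simp only [mem_Ioo] at hz hz'
      have : (i : ℝ) < j + 1 := by
        by_contra h; push Not at h; nlinarith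
      have : (j : ℝ) < i + 1 := by
        by_contra h; push Not at h; nlinarith
      apply hij
      have h3 : i < j + 1 := by exact_mod_cast ‹(i : ℝ) < j + 1›
      have h4 : j < i + 1 := by exact_mod_cast ‹(j : ℝ) < i + 1›
      omega
    · exact fun _ _ => measurableSet_Ioo
  calc _ ≤ ((∫⁻ s in Ioo 0 ε, ∑ k ∈ Finset.range N, f ((c + ε * k) + s)) / ENNReal.ofReal ε)
        * ENNReal.ofReal ε := by gcongr
    _ ≤ ∫⁻ s in Ioo 0 ε, ∑ k ∈ Finset.range N, f ((c + ε * k) + s) :=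
        (ENNReal.div_mul_cancel (by simp [hε]) ENNReal.ofReal_ne_top).le
    _ ≤ _ := h1

lemma exp_formula {a b : ℝ} (hab : a ≤ b) (F F' : ℝ → ℂ) (hF : Continuous F) (hF' : Continuous F')
    (hd : ∀ x ∈ Icc a b, HasDerivAt F (F' x) x) (h0 : ∀ x ∈ Icc a b, F x ≠ 0) :
    F b = F a * Complex.exp (∫ x in a..b, F' x / F x) := by
  have hco : ContinuousOn (fun x => F' x / F x) (Icc a b) :=
    hF'.continuousOn.div hF.continuousOn h0
  have hii : ∀ x ∈ Icc a b, IntervalIntegrable (fun x => F' x / F x) volume a x := by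
    intro x hx
    refine ContinuousOn.intervalIntegrable ?_
    rw [uIcc_of_le hx.1]
    exact hco.mono (Icc_subset_Icc_right hx.2)
  have hm : Measurable (fun x => F' x / F x) := hF'.measurable.div hF.measurable
  have hder : ∀ x ∈ Icc a b, HasDerivAt (fun y => ∫ t in a..y, F' t / F t) (F' x / F x) x := by
    intro x hx
    exact intervalIntegral.integral_hasDerivAt_right (hii x hx)
      hm.stronglyMeasurable.stronglyMeasurableAtFilter
      (hF'.continuousAt.div hF.continuousAt (h0 x hx))
  have hH : ∀ x ∈ Icc a b,
      HasDerivAt (fun y => F y * Complex.exp (-(∫ t in a..y, F' t / F t))) 0 x := by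
    intro x hx
    have h1 := (hd x hx).mul ((hder x hx).neg.cexp)
    refine h1.congr_deriv ?_
    have h2 : F x * (F' x / F x) = F' x := mul_div_cancel₀ _ (h0 x hx)
    linear_combination (-Complex.exp (-(∫ t in a..x, F' t / F t))) * h2
  have hc := constant_of_has_deriv_right_zero
    (fun x hx => (hH x hx).continuousAt.continuousWithinAt)
    (fun x hx => (hH x (Ico_subset_Icc_self hx)).hasDerivWithinAt) b ⟨hab, le_rfl⟩
  simp only [intervalIntegral.integral_same, neg_zero, Complex.exp_zero, mul_one] at hc
  rw [← hc, mul_assoc, ← Complex.exp_add]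
  simp

lemma edge_limit {a b : ℝ} (hab : a < b) (F F' : ℕ → ℝ → ℂ) (f g : ℝ → ℂ)
    (hF : ∀ n, Continuous (F n)) (hF' : ∀ n, Continuous (F' n))
    (hd : ∀ᶠ n in atTop, ∀ x ∈ Icc a b, HasDerivAt (F n) (F' n x) x)
    (hf : IntervalIntegrable f volume a b) (hg : IntervalIntegrable g volume a b)
    (hFf : Tendsto (fun n => ∫ x in a..b, ‖F n x - f x‖) atTop (𝓝 0))
    (hFg : Tendsto (fun n => ∫ x in a..b, ‖F' n x - g x‖) atTop (𝓝 0))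
    (h1 : ∀ᵐ x ∂volume.restrict (Ioc a b), ‖f x‖ = 1) :
    ∃ wa wb : ℂ, Tendsto (fun n => F n a) atTop (𝓝 wa) ∧ Tendsto (fun n => F n b) atTop (𝓝 wb) ∧
      wa ≠ 0 ∧ wb = wa * Complex.exp (∫ x in a..b, (starRingEnd ℂ) (f x) * g x) := by
  have hle := hab.le
  -- the continuous representative minus its value at `a`
  let G : ℝ → ℂ := fun y => ∫ t in a..y, g t
  have hsub : ∀ y ∈ Icc a b, IntervalIntegrable g volume a y := fun y hy =>
    hg.mono_set (by rw [uIcc_of_le hy.1, uIcc_of_le hle]; exact Icc_subset_Icc_right hy.2)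
  have hGc : ContinuousOn G (Icc a b) := by
    have := intervalIntegral.continuousOn_primitive_interval (μ := volume) (f := g) (a := a) (b := b)
      (by rw [uIcc_of_le hle]; exact (intervalIntegrable_iff_integrableOn_Icc_of_le hle).1 hg)
    rwa [uIcc_of_le hle] at this
  let e : ℕ → ℝ := fun n => ∫ x in a..b, ‖F' n x - g x‖
  have hFgi : ∀ n, IntervalIntegrable (fun x => ‖F' n x - g x‖) volume a b := fun n =>
    (((hF' n).intervalIntegrable a b).sub hg).norm
  have hFfi : ∀ n, IntervalIntegrable (fun x => ‖F n x - f x‖) volume a b := fun n =>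
    (((hF n).intervalIntegrable a b).sub hf).norm
  have hGi : IntervalIntegrable G volume a b := by
    refine ContinuousOn.intervalIntegrable ?_
    rwa [uIcc_of_le hle]
  -- difference estimate
  have hdiff : ∀ᶠ n in atTop, ∀ y ∈ Icc a b, ‖F n y - F n a - G y‖ ≤ e n := by
    filter_upwards [hd] with n hn y hy
    have h2 : ∫ t in a..y, F' n t = F n y - F n a :=
      intervalIntegral.integral_eq_sub_of_hasDerivAt
        (fun x hx => hn x (by
          rw [uIcc_of_le hy.1] at hx; exact ⟨hx.1, hx.2.trans hy.2⟩))
        ((hF' n).intervalIntegrable a y)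
    rw [← h2, ← intervalIntegral.integral_sub ((hF' n).intervalIntegrable a y) (hsub y hy)]
    refine (intervalIntegral.norm_integral_le_integral_norm hy.1).trans ?_
    exact intervalIntegral.integral_mono_interval le_rfl hy.1 hy.2
      (Eventually.of_forall fun _ => norm_nonneg _) (hFgi n)
  -- limit of values at `a`
  let c : ℂ := (1 / ((b : ℂ) - a)) * ∫ x in a..b, (f x - G x)
  have hba : ((b : ℂ) - a) ≠ 0 := by
    rw [sub_ne_zero]; exact_mod_cast hab.ne'
  have hFa : Tendsto (fun n => F n a) atTop (𝓝 c) := by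
    rw [tendsto_iff_norm_sub_tendsto_zero]
    have hb2 : ∀ᶠ n in atTop, ‖F n a - c‖ ≤
        (1 / (b - a)) * ((∫ x in a..b, ‖F n x - f x‖) + e n * (b - a)) := by
      filter_upwards [hdiff] with n hn
      have h3 : F n a - c = (1 / ((b : ℂ) - a)) * ∫ x in a..b, (F n a - (f x - G x)) := by
        rw [intervalIntegral.integral_sub (by simp) (hf.sub hGi)]
        simp only [intervalIntegral.integral_const, c]
        rw [mul_sub]
        congr 1
        rw [Complex.real_smul]
        push_cast
        field_simp
      rw [h3, norm_mul]
      have h4 : ‖(1 / ((b : ℂ) - a))‖ = 1 / (b - a) := by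
        rw [norm_div, norm_one, ← Complex.ofReal_sub, Complex.norm_real, Real.norm_eq_abs,
          abs_of_pos (by linarith)]
      rw [h4]
      have h6 : 0 < b - a := by linarith
      refine mul_le_mul_of_nonneg_left ?_ (by positivity)
      refine (intervalIntegral.norm_integral_le_integral_norm hle).trans ?_
      have h5 : (∫ x in a..b, ‖F n x - f x‖) + e n * (b - a) =
          ∫ x in a..b, (‖F n x - f x‖ + e n) := by
        rw [intervalIntegral.integral_add (hFfi n) (by simp)]
        simp [mul_comm]
      rw [h5]
      refine intervalIntegral.integral_mono_on hle ?_ ((hFfi n).add (by simp)) ?_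
      · exact (((by simp : IntervalIntegrable (fun _ => F n a) volume a b)).sub (hf.sub hGi)).norm
      · intro x hx
        have := hn x hx
        calc ‖F n a - (f x - G x)‖ = ‖(F n x - f x) - (F n x - F n a - G x)‖ := by ring_nf
          _ ≤ _ := (norm_sub_le _ _).trans (by linarith)
    refine squeeze_zero' (Eventually.of_forall fun _ => norm_nonneg _) hb2 ?_
    have := (hFf.add (hFg.mul_const (b - a))).const_mul (1 / (b - a))
    simpa using this
  let w : ℝ → ℂ := fun y => c + G y
  have hwc : ContinuousOn w (Icc a b) := continuousOn_const.add hGc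
  let e' : ℕ → ℝ := fun n => ‖F n a - c‖ + e n
  have he' : Tendsto e' atTop (𝓝 0) := by
    have := (tendsto_iff_norm_sub_tendsto_zero.1 hFa).add hFg
    simpa using this
  have hFw : ∀ᶠ n in atTop, ∀ y ∈ Icc a b, ‖F n y - w y‖ ≤ e' n := by
    filter_upwards [hdiff] with n hn y hy
    calc ‖F n y - w y‖ = ‖(F n a - c) + (F n y - F n a - G y)‖ := by simp only [w]; ring_nf
      _ ≤ _ := (norm_add_le _ _).trans (by have := hn y hy; simp only [e']; linarith)
  have hwi : IntervalIntegrable w volume a b := by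
    refine ContinuousOn.intervalIntegrable ?_
    rwa [uIcc_of_le hle]
  -- `w = f` almost everywhere
  have hwf : ∀ᵐ x ∂volume.restrict (Ioc a b), w x = f x := by
    have h0 : ∫ x in a..b, ‖w x - f x‖ = 0 := by
      have hb3 : ∀ᶠ n in atTop, ∫ x in a..b, ‖w x - f x‖ ≤
          (∫ x in a..b, ‖F n x - f x‖) + e' n * (b - a) := by
        filter_upwards [hFw] with n hn
        have h5 : (∫ x in a..b, ‖F n x - f x‖) + e' n * (b - a) =
            ∫ x in a..b, (‖F n x - f x‖ + e' n) := by
          rw [intervalIntegral.integral_add (hFfi n) (by simp)]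
          simp [mul_comm]
        rw [h5]
        refine intervalIntegral.integral_mono_on hle (hwi.sub hf).norm
          ((hFfi n).add (by simp)) ?_
        intro x hx
        have := hn x hx
        calc ‖w x - f x‖ = ‖(F n x - f x) - (F n x - w x)‖ := by ring_nf
          _ ≤ _ := (norm_sub_le _ _).trans (by linarith)
      have h6 : Tendsto (fun n => (∫ x in a..b, ‖F n x - f x‖) + e' n * (b - a)) atTop (𝓝 0) := by
        simpa using hFf.add (he'.mul_const (b - a))
      exact le_antisymm (ge_of_tendsto h6 hb3)
        (intervalIntegral.integral_nonneg hle fun _ _ => norm_nonneg _)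
    rw [intervalIntegral.integral_of_le hle, integral_eq_zero_iff_of_nonneg
      (fun _ => norm_nonneg _)
      ((intervalIntegrable_iff_integrableOn_Ioc_of_le hle).1 (hwi.sub hf).norm)] at h0
    filter_upwards [h0] with x hx
    simpa [sub_eq_zero] using hx
  -- `‖w‖ = 1`
  have hw1 : ∀ x ∈ Icc a b, ‖w x‖ = 1 := by
    have hae : (fun x => ‖w x‖) =ᵐ[volume.restrict (Ioo a b)] fun _ => (1 : ℝ) := by
      refine ae_restrict_of_ae_restrict_of_subset Ioo_subset_Ioc_self ?_
      filter_upwards [hwf, h1] with x hx hx1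
      rw [hx, hx1]
    have h7 : EqOn (fun x => ‖w x‖) (fun _ => (1 : ℝ)) (Ioo a b) :=
      Measure.eqOn_open_of_ae_eq hae isOpen_Ioo (hwc.norm.mono Ioo_subset_Icc_self)
        continuousOn_const
    have h8 := h7.of_subset_closure hwc.norm continuousOn_const Ioo_subset_Icc_self
      (by rw [closure_Ioo hab.ne])
    exact fun x hx => h8 hx
  have hFb : Tendsto (fun n => F n b) atTop (𝓝 (w b)) := by
    rw [tendsto_iff_norm_sub_tendsto_zero]
    refine squeeze_zero' (Eventually.of_forall fun _ => norm_nonneg _) ?_ he'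
    filter_upwards [hFw] with n hn using hn b ⟨hle, le_rfl⟩
  have hwa : w a = c := by simp [w, G]
  refine ⟨c, w b, hFa, hFb, ?_, ?_⟩
  · have := hw1 a ⟨le_rfl, hle⟩
    rw [hwa] at this
    intro h
    rw [h, norm_zero] at this
    exact zero_ne_one this
  -- the exponential formula
  have hhalf : ∀ᶠ n in atTop, ∀ y ∈ Icc a b, 1 / 2 ≤ ‖F n y‖ := by
    have : ∀ᶠ n in atTop, e' n < 1 / 2 := he'.eventually (gt_mem_nhds (by norm_num))
    filter_upwards [hFw, this] with n hn hn2 y hy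
    have h9 := hw1 y hy
    have h10 := hn y hy
    have h11 : ‖w y‖ ≤ ‖F n y‖ + ‖F n y - w y‖ := by
      calc ‖w y‖ = ‖F n y - (F n y - w y)‖ := by ring_nf
        _ ≤ _ := norm_sub_le _ _
    linarith
  have hgw : IntervalIntegrable (fun x => g x / w x) volume a b := by
    simp only [div_eq_mul_inv]
    refine hg.mul_continuousOn ?_
    rw [uIcc_of_le hle]
    refine hwc.inv₀ fun x hx h => ?_
    have := hw1 x hx
    rw [h, norm_zero] at this
    exact zero_ne_one this
  have hlim : Tendsto (fun n => ∫ x in a..b, F' n x / F n x) atTop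
      (𝓝 (∫ x in a..b, g x / w x)) := by
    rw [tendsto_iff_norm_sub_tendsto_zero]
    have hb4 : ∀ᶠ n in atTop, ‖(∫ x in a..b, F' n x / F n x) - ∫ x in a..b, g x / w x‖ ≤
        2 * e n + (2 * e' n) * ∫ x in a..b, ‖g x‖ := by
      filter_upwards [hhalf, hFw] with n hn hn2
      have hq : IntervalIntegrable (fun x => F' n x / F n x) volume a b := by
        refine ContinuousOn.intervalIntegrable ?_
        rw [uIcc_of_le hle]
        refine (hF' n).continuousOn.div (hF n).continuousOn fun x hx h => ?_
        have := hn x hx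
        rw [h, norm_zero] at this
        norm_num at this
      rw [← intervalIntegral.integral_sub hq hgw]
      refine (intervalIntegral.norm_integral_le_integral_norm hle).trans ?_
      have h12 : 2 * e n + (2 * e' n) * ∫ x in a..b, ‖g x‖ =
          ∫ x in a..b, (2 * ‖F' n x - g x‖ + (2 * e' n) * ‖g x‖) := by
        rw [intervalIntegral.integral_add ((hFgi n).const_mul 2) (hg.norm.const_mul _),
          intervalIntegral.integral_const_mul, intervalIntegral.integral_const_mul]
      rw [h12]
      refine intervalIntegral.integral_mono_on hle (hq.sub hgw).norm
        (((hFgi n).const_mul 2).add (hg.norm.const_mul _)) ?_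
      intro x hx
      have hFx := hn x hx
      have hFx0 : F n x ≠ 0 := fun h => by
        rw [h, norm_zero] at hFx
        norm_num at hFx
      have hwx := hw1 x hx
      have hwx0 : w x ≠ 0 := fun h => by
        rw [h, norm_zero] at hwx
        norm_num at hwx
      have hdx := hn2 x hx
      have hid : F' n x / F n x - g x / w x =
          (F' n x - g x) / F n x + g x * (w x - F n x) / (F n x * w x) := by
        field_simp
        ring
      rw [hid]
      refine (norm_add_le _ _).trans (add_le_add ?_ ?_)
      · rw [norm_div, div_le_iff₀ (by linarith)]
        nlinarith [norm_nonneg (F' n x - g x)]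
      · rw [norm_div, norm_mul, norm_mul, hwx, mul_one, norm_sub_rev, div_le_iff₀ (by linarith)]
        have h13 := norm_nonneg (g x)
        have h14 := norm_nonneg (F n x - w x)
        have h15 : ‖g x‖ * ‖F n x - w x‖ ≤ ‖g x‖ * e' n := mul_le_mul_of_nonneg_left hdx h13
        have h16 : 0 ≤ ‖g x‖ * e' n := mul_nonneg h13 (h14.trans hdx)
        nlinarith
    refine squeeze_zero' (Eventually.of_forall fun _ => norm_nonneg _) hb4 ?_
    have := (hFg.const_mul 2).add ((he'.const_mul 2).mul_const (∫ x in a..b, ‖g x‖))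
    simpa using this
  have hconj : ∫ x in a..b, g x / w x = ∫ x in a..b, (starRingEnd ℂ) (f x) * g x := by
    rw [intervalIntegral.integral_of_le hle, intervalIntegral.integral_of_le hle]
    refine integral_congr_ae ?_
    filter_upwards [hwf, h1] with x hx hx1
    rw [hx, div_eq_mul_inv, Complex.inv_def, Complex.normSq_eq_norm_sq, hx1]
    simp [mul_comm]
  rw [← hconj]
  have hfin : Tendsto (fun n => F n a * Complex.exp (∫ x in a..b, F' n x / F n x)) atTop
      (𝓝 (c * Complex.exp (∫ x in a..b, g x / w x))) :=
    hFa.mul ((Complex.continuous_exp.tendsto _).comp hlim)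
  refine tendsto_nhds_unique hFb (hfin.congr' ?_)
  filter_upwards [hhalf, hd] with n hn hdn
  refine (exp_formula hle (F n) (F' n) (hF n) (hF' n) hdn fun x hx h => ?_).symm
  have := hn x hx
  rw [h, norm_zero] at this
  norm_num at this

/-! ### Mollification -/

/-- Mollification of `f` by a normalized bump. -/
def mol (φ : ContDiffBump (0 : ℝ × ℝ)) (f : ℝ × ℝ → ℂ) : ℝ × ℝ → ℂ :=
  convolution (φ.normed volume) f (ContinuousLinearMap.lsmul ℝ ℝ) volume

lemma mol_apply (φ : ContDiffBump (0 : ℝ × ℝ)) (f : ℝ × ℝ → ℂ) (x : ℝ × ℝ) :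
    mol φ f x = ∫ t, φ.normed volume t • f (x - t) := by
  simp [mol, convolution_def]

lemma mol_continuous (φ : ContDiffBump (0 : ℝ × ℝ)) (f : ℝ × ℝ → ℂ) (hf : Integrable f) :
    Continuous (mol φ f) :=
  φ.hasCompactSupport_normed.continuous_convolution_left _ φ.continuous_normed
    hf.locallyIntegrable

lemma lintegral_mol_le (φ : ContDiffBump (0 : ℝ × ℝ)) (h : ℝ × ℝ → ℂ) (hh : Integrable h) :
    ∫⁻ x, ‖mol φ h x‖ₑ ≤ ∫⁻ x, ‖h x‖ₑ := by
  have h1 : ∀ x, ‖mol φ h x‖ₑ ≤ ∫⁻ t, ‖φ.normed volume t‖ₑ * ‖h (x - t)‖ₑ := by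
    intro x
    rw [mol_apply]
    refine (enorm_integral_le_lintegral_enorm _).trans_eq ?_
    simp only [enorm_smul]
  refine (lintegral_mono h1).trans ?_
  rw [lintegral_lintegral_swap]
  · have h2 : ∀ t : ℝ × ℝ, ∫⁻ x, ‖φ.normed volume t‖ₑ * ‖h (x - t)‖ₑ =
        ‖φ.normed volume t‖ₑ * ∫⁻ x, ‖h x‖ₑ := by
      intro t
      rw [lintegral_const_mul' _ _ enorm_ne_top,
        lintegral_sub_right_eq_self (fun x => ‖h x‖ₑ) t]
    simp only [h2]
    rw [lintegral_mul_const _ (φ.continuous_normed.enorm.measurable)]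
    have h3 : ∫⁻ t, ‖φ.normed volume t‖ₑ = 1 := by
      rw [← ofReal_integral_norm_eq_lintegral_enorm φ.integrable_normed]
      have : ∀ t, ‖φ.normed volume t‖ = φ.normed volume t := fun t => by
        rw [Real.norm_eq_abs, abs_of_nonneg (φ.nonneg_normed t)]
      simp only [this, φ.integral_normed, ENNReal.ofReal_one]
    rw [h3, one_mul]
  · change AEMeasurable (fun p : (ℝ × ℝ) × (ℝ × ℝ) => ‖φ.normed volume p.2‖ₑ * ‖h (p.1 - p.2)‖ₑ) _
    have a1 : AEMeasurable (fun p : (ℝ × ℝ) × (ℝ × ℝ) => ‖φ.normed volume p.2‖ₑ)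
        (volume.prod volume) :=
      (φ.continuous_normed.comp continuous_snd).enorm.measurable.aemeasurable
    have a2 : AEStronglyMeasurable (fun p : (ℝ × ℝ) × (ℝ × ℝ) => h (p.1 - p.2))
        (volume.prod volume) :=
      hh.aestronglyMeasurable.comp_quasiMeasurePreserving
        (quasiMeasurePreserving_sub_of_right_invariant volume volume)
    exact a1.mul a2.enorm

lemma mol_sub (φ : ContDiffBump (0 : ℝ × ℝ)) (f g : ℝ × ℝ → ℂ) (hf : Integrable f)
    (hg : Integrable g) (x : ℝ × ℝ) : mol φ (fun x => f x - g x) x = mol φ f x - mol φ g x := by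
  have e1 := φ.hasCompactSupport_normed.convolutionExists_left (ContinuousLinearMap.lsmul ℝ ℝ)
    (φ.continuous_normed (μ := volume)) hf.locallyIntegrable x
  have e2 := φ.hasCompactSupport_normed.convolutionExists_left (ContinuousLinearMap.lsmul ℝ ℝ)
    (φ.continuous_normed (μ := volume)) hg.locallyIntegrable x
  simp only [mol_apply, smul_sub]
  exact integral_sub (by simpa [ConvolutionExistsAt] using e1)
    (by simpa [ConvolutionExistsAt] using e2)

lemma moll_close (f : ℝ × ℝ → ℂ) (hf : Integrable f) (η : ℝ) (hη : 0 < η) :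
    ∃ δ > 0, ∀ φ : ContDiffBump (0 : ℝ × ℝ), φ.rOut ≤ δ →
      ∫⁻ x, ‖mol φ f x - f x‖ₑ ≤ ENNReal.ofReal η := by
  have hη3 : ENNReal.ofReal (η / 3) ≠ 0 := by
    simp only [ne_eq, ENNReal.ofReal_eq_zero, not_le]; positivity
  obtain ⟨g, hgc, hfg, hg, hgi⟩ := hf.exists_hasCompactSupport_lintegral_sub_le hη3
  set K : Set (ℝ × ℝ) := cthickening 1 (tsupport g) with hK
  have hKc : IsCompact K := hgc.isCompact.cthickening
  have hKm : volume K ≠ ⊤ := hKc.measure_lt_top.ne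
  set m : ℝ := (volume K).toReal with hm
  have hm0 : 0 ≤ m := ENNReal.toReal_nonneg
  set η' : ℝ := η / 3 / (m + 1) with hη'
  have hη'0 : 0 < η' := by positivity
  obtain ⟨δ, hδ, hu⟩ := Metric.uniformContinuous_iff.1
    (hgc.uniformContinuous_of_continuous hg) η' hη'0
  refine ⟨min δ 1, by positivity, fun φ hφ => ?_⟩
  have hd : ∀ x, ‖mol φ g x - g x‖ ≤ η' := by
    intro x
    rw [← dist_eq_norm]
    refine φ.dist_normed_convolution_le hg.aestronglyMeasurable fun y hy => (hu ?_).le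
    exact (mem_ball.1 hy).trans_le (hφ.trans (min_le_left _ _))
  have hz : ∀ x, x ∉ K → mol φ g x - g x = 0 := by
    intro x hx
    have hb : ∀ y ∈ ball x φ.rOut, g y = 0 := by
      intro y hy
      by_contra hne
      apply hx
      refine mem_cthickening_of_dist_le x y 1 _ (subset_tsupport _ hne) ?_
      rw [dist_comm]
      exact (mem_ball.1 hy).le.trans (hφ.trans (min_le_right _ _))
    have h0 : g x = 0 := hb x (mem_ball_self φ.rOut_pos)
    have := φ.dist_normed_convolution_le (μ := volume) (g := g) (x₀ := x) (ε := 0)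
      hg.aestronglyMeasurable
      (fun y hy => by rw [hb y hy, h0, dist_self])
    have := dist_le_zero.1 this
    exact sub_eq_zero.2 this
  have hgg : ∫⁻ x, ‖mol φ g x - g x‖ₑ ≤ ENNReal.ofReal (η / 3) := by
    calc ∫⁻ x, ‖mol φ g x - g x‖ₑ ≤ ∫⁻ x, K.indicator (fun _ => ENNReal.ofReal η') x := by
          refine lintegral_mono fun x => ?_
          by_cases hx : x ∈ K
          · rw [indicator_of_mem hx, ← ofReal_norm]
            exact ENNReal.ofReal_le_ofReal (hd x)
          · rw [hz x hx]; simp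
      _ = ENNReal.ofReal η' * volume K := by
          rw [lintegral_indicator hKc.measurableSet, setLIntegral_const]
      _ = ENNReal.ofReal (η' * m) := by
          rw [ENNReal.ofReal_mul hη'0.le, hm, ENNReal.ofReal_toReal hKm]
      _ ≤ _ := by
          refine ENNReal.ofReal_le_ofReal ?_
          rw [hη', div_mul_eq_mul_div, div_le_iff₀ (by positivity)]
          nlinarith
  have hfgi : Integrable (fun x => f x - g x) := hf.sub hgi
  have hcont := lintegral_mol_le φ _ hfgi
  calc ∫⁻ x, ‖mol φ f x - f x‖ₑ ≤
      ∫⁻ x, ((‖mol φ (fun x => f x - g x) x‖ₑ + ‖f x - g x‖ₑ) + ‖mol φ g x - g x‖ₑ) := by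
        refine lintegral_mono fun x => ?_
        rw [mol_sub φ f g hf hgi]
        have : mol φ f x - f x = ((mol φ f x - mol φ g x) - (f x - g x)) + (mol φ g x - g x) := by
          ring
        rw [this]
        refine (enorm_add_le _ _).trans ?_
        gcongr
        exact enorm_sub_le
    _ = ((∫⁻ x, ‖mol φ (fun x => f x - g x) x‖ₑ) + ∫⁻ x, ‖f x - g x‖ₑ) +
        ∫⁻ x, ‖mol φ g x - g x‖ₑ := by
        rw [lintegral_add_right, lintegral_add_left]
        · exact (mol_continuous φ _ hfgi).enorm.measurable
        · exact ((mol_continuous φ _ hgi).sub hg).enorm.measurable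
    _ ≤ (ENNReal.ofReal (η / 3) + ENNReal.ofReal (η / 3)) + ENNReal.ofReal (η / 3) := by
        gcongr
        exact hcont.trans hfg
    _ = ENNReal.ofReal η := by
        rw [← ENNReal.ofReal_add (by positivity) (by positivity),
          ← ENNReal.ofReal_add (by positivity) (by positivity)]
        congr 1; ring

/-- a bump of small outer radius -/
def smallBump (r : ℝ) (hr : 0 < r) : ContDiffBump (0 : ℝ × ℝ) := ⟨r / 2, r, by positivity, by linarith⟩

lemma exists_bumps (f g h : ℝ × ℝ → ℂ) (hf : Integrable f) (hg : Integrable g)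
    (hh : Integrable h) : ∃ φ : ℕ → ContDiffBump (0 : ℝ × ℝ),
      Tendsto (fun n => (φ n).rOut) atTop (𝓝 0) ∧
      (∀ n, ∫⁻ x, ‖mol (φ n) f x - f x‖ₑ ≤ ENNReal.ofReal ((1 / 2) ^ n)) ∧
      (∀ n, ∫⁻ x, ‖mol (φ n) g x - g x‖ₑ ≤ ENNReal.ofReal ((1 / 2) ^ n)) ∧
      (∀ n, ∫⁻ x, ‖mol (φ n) h x - h x‖ₑ ≤ ENNReal.ofReal ((1 / 2) ^ n)) := by
  choose a ha ha' using fun n : ℕ => moll_close f hf ((1 / 2) ^ n) (by positivity)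
  choose b hb hb' using fun n : ℕ => moll_close g hg ((1 / 2) ^ n) (by positivity)
  choose c hc hc' using fun n : ℕ => moll_close h hh ((1 / 2) ^ n) (by positivity)
  let r : ℕ → ℝ := fun n => min (min (a n) (b n)) (min (c n) (1 / ((n : ℝ) + 1)))
  have hr : ∀ n, 0 < r n := fun n => by
    have := ha n; have := hb n; have := hc n
    have h4 : (0 : ℝ) < 1 / ((n : ℝ) + 1) := by positivity
    exact lt_min (lt_min (ha n) (hb n)) (lt_min (hc n) h4)
  refine ⟨fun n => smallBump (r n) (hr n), ?_, fun n => ha' n _ ?_, fun n => hb' n _ ?_,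
    fun n => hc' n _ ?_⟩
  · refine squeeze_zero (fun n => (hr n).le) (fun n => ?_) tendsto_one_div_add_atTop_nhds_zero_nat
    exact (min_le_right _ _).trans (min_le_right _ _)
  · exact (min_le_left _ _).trans (min_le_left _ _)
  · exact (min_le_left _ _).trans (min_le_right _ _)
  · exact (min_le_right _ _).trans (min_le_left _ _)

lemma ae_line_tendsto (h : ℕ → ℝ × ℝ → ℂ) (hm : ∀ n, AEStronglyMeasurable (h n))
    (hb : ∀ n, ∫⁻ x, ‖h n x‖ₑ ≤ ENNReal.ofReal ((1 / 2) ^ n)) :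
    ∀ᵐ x : ℝ, Tendsto (fun n => ∫⁻ y : ℝ, ‖h n (x, y)‖ₑ) atTop (𝓝 0) := by
  have hme : ∀ n, AEMeasurable (fun z => ‖h n z‖ₑ) (volume.prod volume : Measure (ℝ × ℝ)) :=
    fun n => (hm n).enorm
  have hml : ∀ n, AEMeasurable (fun x : ℝ => ∫⁻ y : ℝ, ‖h n (x, y)‖ₑ) := fun n =>
    (hme n).lintegral_prod_right'
  have h1 : ∫⁻ x : ℝ, ∑' n, ∫⁻ y : ℝ, ‖h n (x, y)‖ₑ ≠ ⊤ := by
    rw [lintegral_tsum hml]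
    have h2 : ∀ n, ∫⁻ x : ℝ, ∫⁻ y : ℝ, ‖h n (x, y)‖ₑ ≤ ENNReal.ofReal ((1 / 2) ^ n) := by
      intro n
      rw [← lintegral_prod _ (hme n)]
      exact hb n
    refine ((ENNReal.tsum_le_tsum h2).trans_lt ?_).ne
    rw [← ENNReal.ofReal_tsum_of_nonneg (fun n => by positivity)
      (summable_geometric_of_lt_one (by norm_num) (by norm_num))]
    exact ENNReal.ofReal_lt_top
  filter_upwards [ae_lt_top' (AEMeasurable.tsum hml) h1] with x hx
  exact ENNReal.tendsto_atTop_zero_of_tsum_ne_top hx.ne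

/-- weak directional derivative on an open set of `ℝ × ℝ`, for functions extended by zero -/
def WeakPart (Ω : Set (ℝ × ℝ)) (v : ℝ × ℝ) (u g : ℝ × ℝ → ℂ) : Prop :=
  ∀ φ : ℝ × ℝ → ℝ, ContDiff ℝ (⊤ : ℕ∞) φ → HasCompactSupport φ → tsupport φ ⊆ Ω →
    ∫ x, (fderiv ℝ φ x v) • u x = - ∫ x, φ x • g x

lemma mol_hasFDerivAt {Ω : Set (ℝ × ℝ)} {u : ℝ × ℝ → ℂ}
    (hu : Integrable u) 
    (φ : ContDiffBump (0 : ℝ × ℝ)) (x : ℝ × ℝ) (hx : closedBall x φ.rOut ⊆ Ω) :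
    ∃ D : (ℝ × ℝ) →L[ℝ] ℂ, HasFDerivAt (mol φ u) D x ∧
      ∀ (v : ℝ × ℝ) (g : ℝ × ℝ → ℂ), WeakPart Ω v u g → D v = mol φ g x := by
  have hρ : ContDiff ℝ (⊤ : ℕ∞) (φ.normed (volume : Measure (ℝ × ℝ))) := φ.contDiff_normed
  have hρ1 : ContDiff ℝ 1 (φ.normed (volume : Measure (ℝ × ℝ))) := hρ.of_le (by simp)
  have h1 := φ.hasCompactSupport_normed.hasFDerivAt_convolution_left
    (ContinuousLinearMap.lsmul ℝ ℝ) hρ1 (hu.locallyIntegrable) x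
  refine ⟨_, h1, fun v g hw => ?_⟩
  have hex := (φ.hasCompactSupport_normed (μ := volume)).fderiv (𝕜 := ℝ)
    |>.convolutionExists_left ((ContinuousLinearMap.lsmul ℝ ℝ (E := ℂ)).precompL (ℝ × ℝ))
      (hρ1.continuous_fderiv one_ne_zero) hu.locallyIntegrable x
  rw [convolution_def, ContinuousLinearMap.integral_apply (by simpa [ConvolutionExistsAt] using hex)]
  simp only [ContinuousLinearMap.precompL_apply, ContinuousLinearMap.lsmul_apply]
  rw [← integral_sub_left_eq_self _ volume x]
  simp only [sub_sub_cancel]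
  have hψ : ContDiff ℝ (⊤ : ℕ∞) (fun s => φ.normed (volume : Measure (ℝ × ℝ)) (x - s)) :=
    hρ.comp (contDiff_const.sub contDiff_id)
  have hsup : tsupport (fun s => φ.normed (volume : Measure (ℝ × ℝ)) (x - s)) ⊆
      closedBall x φ.rOut := by
    refine closure_minimal ?_ isClosed_closedBall
    intro s hs
    have : x - s ∈ Function.support (φ.normed (volume : Measure (ℝ × ℝ))) := hs
    rw [φ.support_normed_eq] at this
    rw [mem_closedBall, dist_comm, dist_eq_norm]
    exact (mem_ball_zero_iff.1 this).le
  have hc : HasCompactSupport (fun s => φ.normed (volume : Measure (ℝ × ℝ)) (x - s)) :=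
    HasCompactSupport.of_support_subset_isCompact (isCompact_closedBall x φ.rOut)
      ((subset_tsupport _).trans hsup)
  have h2 := hw _ hψ hc (hsup.trans hx)
  have h3 : ∀ s, fderiv ℝ (fun s => φ.normed (volume : Measure (ℝ × ℝ)) (x - s)) s v =
      - fderiv ℝ (φ.normed (volume : Measure (ℝ × ℝ))) (x - s) v := by
    intro s
    have h4 : HasFDerivAt (fun s : ℝ × ℝ => x - s) (-(ContinuousLinearMap.id ℝ (ℝ × ℝ))) s :=
      (hasFDerivAt_id s).const_sub x
    have h5 := ((hρ1.differentiable one_ne_zero (x - s)).hasFDerivAt).comp s h4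
    have h6 := h5.fderiv
    simp only [Function.comp_def] at h6
    rw [h6]
    simp
  simp only [h3, neg_smul, integral_neg, neg_inj] at h2
  rw [h2, mol_apply, ← integral_sub_left_eq_self _ volume x]
  simp

lemma tendsto_interval_of_lintegral {F : ℕ → ℝ → ℂ} {a b : ℝ} (hab : a ≤ b)
    (hm : ∀ n, AEStronglyMeasurable (F n))
    (h : Tendsto (fun n => ∫⁻ t, ‖F n t‖ₑ) atTop (𝓝 0)) :
    Tendsto (fun n => ∫ t in a..b, ‖F n t‖) atTop (𝓝 0) := by
  have h1 : ∀ n, ∫ t in a..b, ‖F n t‖ = (∫⁻ t in Ioc a b, ‖F n t‖ₑ).toReal := by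
    intro n
    rw [intervalIntegral.integral_of_le hab, integral_norm_eq_lintegral_enorm (hm n).restrict]
  simp only [h1]
  have h2 : Tendsto (fun n => ∫⁻ t in Ioc a b, ‖F n t‖ₑ) atTop (𝓝 0) :=
    tendsto_of_tendsto_of_tendsto_of_le_of_le tendsto_const_nhds h (fun _ => zero_le)
      (fun n => setLIntegral_le_lintegral _ _)
  simpa [Function.comp_def] using (ENNReal.tendsto_toReal ENNReal.zero_ne_top).comp h2

lemma edge_gen {Ω : Set (ℝ × ℝ)} (ho : IsOpen Ω) {u g : ℝ × ℝ → ℂ} (hu : Integrable u)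
    (hg : Integrable g) {v : ℝ × ℝ} (hw : WeakPart Ω v u g)
    (φ : ℕ → ContDiffBump (0 : ℝ × ℝ)) (hφ : Tendsto (fun n => (φ n).rOut) atTop (𝓝 0))
    (γ : ℝ → ℝ × ℝ) (hγ : ∀ t, HasDerivAt γ v t) {a b : ℝ} (hab : a < b)
    (hsub : ∀ t ∈ Icc a b, γ t ∈ Ω)
    (hui : Integrable fun t => u (γ t)) (hgi : Integrable fun t => g (γ t))
    (h1 : ∀ᵐ t, γ t ∈ Ω → ‖u (γ t)‖ = 1)
    (tu : Tendsto (fun n => ∫⁻ t, ‖mol (φ n) u (γ t) - u (γ t)‖ₑ) atTop (𝓝 0))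
    (tg : Tendsto (fun n => ∫⁻ t, ‖mol (φ n) g (γ t) - g (γ t)‖ₑ) atTop (𝓝 0)) :
    ∃ wa wb : ℂ, Tendsto (fun n => mol (φ n) u (γ a)) atTop (𝓝 wa) ∧
      Tendsto (fun n => mol (φ n) u (γ b)) atTop (𝓝 wb) ∧
      wa ≠ 0 ∧ wb = wa * Complex.exp (∫ t in a..b, (starRingEnd ℂ) (u (γ t)) * g (γ t)) := by
  have hγc : Continuous γ := continuous_iff_continuousAt.2 fun t => (hγ t).continuousAt
  have cu : ∀ n, Continuous (fun t => mol (φ n) u (γ t)) := fun n =>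
    (mol_continuous (φ n) u hu).comp hγc
  have cg : ∀ n, Continuous (fun t => mol (φ n) g (γ t)) := fun n =>
    (mol_continuous (φ n) g hg).comp hγc
  refine edge_limit hab (fun n t => mol (φ n) u (γ t)) (fun n t => mol (φ n) g (γ t))
    (fun t => u (γ t)) (fun t => g (γ t)) cu cg ?_ hui.intervalIntegrable hgi.intervalIntegrable
    (tendsto_interval_of_lintegral hab.le
      (fun n => (cu n).aestronglyMeasurable.sub hui.aestronglyMeasurable) tu)
    (tendsto_interval_of_lintegral hab.le
      (fun n => (cg n).aestronglyMeasurable.sub hgi.aestronglyMeasurable) tg) ?_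
  · have hK : IsCompact (γ '' Icc a b) := isCompact_Icc.image hγc
    obtain ⟨δ, hδ, hδs⟩ := hK.exists_cthickening_subset_open ho (by
      rintro _ ⟨t, ht, rfl⟩; exact hsub t ht)
    filter_upwards [hφ.eventually (gt_mem_nhds hδ)] with n hn t ht
    obtain ⟨D, hD, hDv⟩ := mol_hasFDerivAt (Ω := Ω) hu (φ n) (γ t) (by
      intro z hz
      apply hδs
      exact mem_cthickening_of_dist_le z (γ t) δ _ ⟨t, ht, rfl⟩
        ((mem_closedBall.1 hz).trans hn.le))
    have := hD.comp_hasDerivAt t (hγ t)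
    rw [hDv v g hw] at this
    exact this
  · filter_upwards [ae_restrict_of_ae h1, ae_restrict_mem measurableSet_Ioc] with t ht ht2
    exact ht (hsub t (Ioc_subset_Icc_self ht2))

/-- conditions for a good vertical line -/
structure GoodLine (Ω : Set (ℝ × ℝ)) (u g : ℝ × ℝ → ℂ) (φ : ℕ → ContDiffBump (0 : ℝ × ℝ))
    (γ : ℝ → ℝ × ℝ) : Prop where
  hui : Integrable fun t => u (γ t)
  hgi : Integrable fun t => g (γ t)
  h1 : ∀ᵐ t, γ t ∈ Ω → ‖u (γ t)‖ = 1
  tu : Tendsto (fun n => ∫⁻ t, ‖mol (φ n) u (γ t) - u (γ t)‖ₑ) atTop (𝓝 0)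
  tg : Tendsto (fun n => ∫⁻ t, ‖mol (φ n) g (γ t) - g (γ t)‖ₑ) atTop (𝓝 0)

lemma cell_int {Ω : Set (ℝ × ℝ)} (ho : IsOpen Ω) {u g1 g2 : ℝ × ℝ → ℂ} (hu : Integrable u)
    (hg1 : Integrable g1) (hg2 : Integrable g2) (hw1 : WeakPart Ω (1, 0) u g1)
    (hw2 : WeakPart Ω (0, 1) u g2)
    (φ : ℕ → ContDiffBump (0 : ℝ × ℝ)) (hφ : Tendsto (fun n => (φ n).rOut) atTop (𝓝 0))
    {x0 x1 y0 y1 : ℝ} (hx : x0 < x1) (hy : y0 < y1)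
    (hsub : Icc x0 x1 ×ˢ Icc y0 y1 ⊆ Ω)
    (gx0 : GoodLine Ω u g2 φ fun y => (x0, y)) (gx1 : GoodLine Ω u g2 φ fun y => (x1, y))
    (gy0 : GoodLine Ω u g1 φ fun x => (x, y0)) (gy1 : GoodLine Ω u g1 φ fun x => (x, y1)) :
    ∃ n : ℤ, (∫ x in x0..x1, (starRingEnd ℂ) (u (x, y0)) * g1 (x, y0)) +
      (∫ y in y0..y1, (starRingEnd ℂ) (u (x1, y)) * g2 (x1, y)) -
      (∫ x in x0..x1, (starRingEnd ℂ) (u (x, y1)) * g1 (x, y1)) -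
      (∫ y in y0..y1, (starRingEnd ℂ) (u (x0, y)) * g2 (x0, y)) = n * (2 * Real.pi * Complex.I) := by
  have dv : ∀ x t : ℝ, HasDerivAt (fun y : ℝ => (x, y)) ((0, 1) : ℝ × ℝ) t := fun x t =>
    (hasDerivAt_const t x).prodMk (hasDerivAt_id t)
  have dh : ∀ y t : ℝ, HasDerivAt (fun x : ℝ => (x, y)) ((1, 0) : ℝ × ℝ) t := fun y t =>
    (hasDerivAt_id t).prodMk (hasDerivAt_const t y)
  have mx0 : x0 ∈ Icc x0 x1 := ⟨le_rfl, hx.le⟩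
  have mx1 : x1 ∈ Icc x0 x1 := ⟨hx.le, le_rfl⟩
  have my0 : y0 ∈ Icc y0 y1 := ⟨le_rfl, hy.le⟩
  have my1 : y1 ∈ Icc y0 y1 := ⟨hy.le, le_rfl⟩
  obtain ⟨a1, b1, ha1, hb1, n1, e1⟩ := edge_gen ho hu hg2 hw2 φ hφ _ (dv x0) hy
    (fun t ht => hsub ⟨mx0, ht⟩) gx0.hui gx0.hgi gx0.h1 gx0.tu gx0.tg
  obtain ⟨a2, b2, ha2, hb2, n2, e2⟩ := edge_gen ho hu hg2 hw2 φ hφ _ (dv x1) hy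
    (fun t ht => hsub ⟨mx1, ht⟩) gx1.hui gx1.hgi gx1.h1 gx1.tu gx1.tg
  obtain ⟨a3, b3, ha3, hb3, n3, e3⟩ := edge_gen ho hu hg1 hw1 φ hφ _ (dh y0) hx
    (fun t ht => hsub ⟨ht, my0⟩) gy0.hui gy0.hgi gy0.h1 gy0.tu gy0.tg
  obtain ⟨a4, b4, ha4, hb4, n4, e4⟩ := edge_gen ho hu hg1 hw1 φ hφ _ (dh y1) hx
    (fun t ht => hsub ⟨ht, my1⟩) gy1.hui gy1.hgi gy1.h1 gy1.tu gy1.tg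
  obtain rfl := tendsto_nhds_unique ha1 ha3
  obtain rfl := tendsto_nhds_unique hb1 ha4
  obtain rfl := tendsto_nhds_unique ha2 hb3
  obtain rfl := tendsto_nhds_unique hb2 hb4
  have h5 : b2 = b2 := rfl
  nth_rewrite 1 [e2] at h5
  rw [e3, mul_assoc, ← Complex.exp_add, e4, e1, mul_assoc, ← Complex.exp_add] at h5
  have h6 := mul_left_cancel₀ n1 h5
  obtain ⟨n, hn⟩ := Complex.exp_eq_exp_iff_exists_int.1 h6
  exact ⟨n, by rw [hn]; ring⟩

lemma ae_goodLine_v {Ω : Set (ℝ × ℝ)} {u g : ℝ × ℝ → ℂ} (hu : Integrable u) (hg : Integrable g)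
    (h1 : ∀ᵐ z, z ∈ Ω → ‖u z‖ = 1) (φ : ℕ → ContDiffBump (0 : ℝ × ℝ))
    (bu : ∀ n, ∫⁻ x, ‖mol (φ n) u x - u x‖ₑ ≤ ENNReal.ofReal ((1 / 2) ^ n))
    (bg : ∀ n, ∫⁻ x, ‖mol (φ n) g x - g x‖ₑ ≤ ENNReal.ofReal ((1 / 2) ^ n)) :
    ∀ᵐ x : ℝ, GoodLine Ω u g φ fun y => (x, y) := by
  have a1 := ae_line_tendsto (fun n z => mol (φ n) u z - u z) (fun n =>
    (mol_continuous (φ n) u hu).aestronglyMeasurable.sub hu.aestronglyMeasurable) bu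
  have a2 := ae_line_tendsto (fun n z => mol (φ n) g z - g z) (fun n =>
    (mol_continuous (φ n) g hg).aestronglyMeasurable.sub hg.aestronglyMeasurable) bg
  have a3 := Integrable.prod_right_ae (μ := (volume : Measure ℝ)) (ν := (volume : Measure ℝ)) hu
  have a4 := Integrable.prod_right_ae (μ := (volume : Measure ℝ)) (ν := (volume : Measure ℝ)) hg
  have a5 := Measure.ae_ae_of_ae_prod (μ := (volume : Measure ℝ)) (ν := (volume : Measure ℝ)) h1
  filter_upwards [a1, a2, a3, a4, a5] with x b1 b2 b3 b4 b5
  exact ⟨b3, b4, b5, b1, b2⟩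

lemma mp_swap : MeasurePreserving (Prod.swap : ℝ × ℝ → ℝ × ℝ) volume volume :=
  Measure.measurePreserving_swap

lemma lintegral_swap' (f : ℝ × ℝ → ℝ≥0∞) : ∫⁻ z : ℝ × ℝ, f z.swap = ∫⁻ z, f z :=
  mp_swap.lintegral_comp_emb MeasurableEquiv.prodComm.measurableEmbedding f

lemma ae_goodLine_h {Ω : Set (ℝ × ℝ)} {u g : ℝ × ℝ → ℂ} (hu : Integrable u) (hg : Integrable g)
    (h1 : ∀ᵐ z, z ∈ Ω → ‖u z‖ = 1) (φ : ℕ → ContDiffBump (0 : ℝ × ℝ))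
    (bu : ∀ n, ∫⁻ x, ‖mol (φ n) u x - u x‖ₑ ≤ ENNReal.ofReal ((1 / 2) ^ n))
    (bg : ∀ n, ∫⁻ x, ‖mol (φ n) g x - g x‖ₑ ≤ ENNReal.ofReal ((1 / 2) ^ n)) :
    ∀ᵐ y : ℝ, GoodLine Ω u g φ fun x => (x, y) := by
  have a1 := ae_line_tendsto (fun n z => mol (φ n) u z.swap - u z.swap) (fun n =>
    ((mol_continuous (φ n) u hu).aestronglyMeasurable.sub
      hu.aestronglyMeasurable).comp_measurePreserving mp_swap)
    (fun n => (lintegral_swap' (fun z => ‖mol (φ n) u z - u z‖ₑ)).trans_le (bu n))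
  have a2 := ae_line_tendsto (fun n z => mol (φ n) g z.swap - g z.swap) (fun n =>
    ((mol_continuous (φ n) g hg).aestronglyMeasurable.sub
      hg.aestronglyMeasurable).comp_measurePreserving mp_swap)
    (fun n => (lintegral_swap' (fun z => ‖mol (φ n) g z - g z‖ₑ)).trans_le (bg n))
  have a3 := Integrable.prod_left_ae (μ := (volume : Measure ℝ)) (ν := (volume : Measure ℝ)) hu
  have a4 := Integrable.prod_left_ae (μ := (volume : Measure ℝ)) (ν := (volume : Measure ℝ)) hg
  have a5 := Measure.ae_ae_of_ae_prod (μ := (volume : Measure ℝ)) (ν := (volume : Measure ℝ))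
    (mp_swap.quasiMeasurePreserving.ae h1)
  filter_upwards [a1, a2, a3, a4, a5] with x b1 b2 b3 b4 b5
  exact ⟨b3, b4, b5, b1, b2⟩

open scoped Manifold ContDiff in
lemma smooth_approx {Ω : Set (ℝ × ℝ)} (ho : IsOpen Ω) (p : ℝ × ℝ → ℝ) (hp : Integrable p)
    (h0 : ∀ z, z ∉ Ω → p z = 0) (η : ℝ) (hη : 0 < η) :
    ∃ f : ℝ × ℝ → ℝ, ContDiff ℝ 1 f ∧ HasCompactSupport f ∧ tsupport f ⊆ Ω ∧
      ∫⁻ z, ‖p z - f z‖ₑ ≤ ENNReal.ofReal η := by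
  obtain ⟨f0, hf0c, hf0s, hf0⟩ := MeasureTheory.MemLp.exist_eLpNorm_sub_le
    ENNReal.one_ne_top le_rfl (memLp_one_iff_integrable.2 hp) (ε := η / 2) (by positivity)
  rw [eLpNorm_one_eq_lintegral_enorm] at hf0
  let μ : Measure (ℝ × ℝ) := volume.withDensity fun z => ‖p z‖ₑ
  have : IsFiniteMeasure μ := isFiniteMeasure_withDensity hp.2.ne
  obtain ⟨K, hKΩ, hK, hKm⟩ := ho.measurableSet.exists_isCompact_sdiff_lt (μ := μ)
    (measure_ne_top _ _) (ε := ENNReal.ofReal (η / 2))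
    (by simp only [ne_eq, ENNReal.ofReal_eq_zero, not_le]; positivity)
  obtain ⟨K', hK', hKK', hK'Ω⟩ := exists_compact_between hK ho hKΩ
  obtain ⟨χ, hχ1, hχ0, hχ⟩ := exists_contMDiffMap_one_nhds_of_subset_interior
    𝓘(ℝ, ℝ × ℝ) (n := ⊤) hK.isClosed hKK'
  have hχs : ContDiff ℝ (⊤ : ℕ∞) χ := χ.contMDiff.contDiff
  have hts : tsupport (fun z => χ z * f0 z) ⊆ K' := by
    refine closure_minimal ?_ hK'.isClosed
    intro z hz
    by_contra hzK
    exact hz (by simp only [hχ0 z hzK, zero_mul])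
  refine ⟨fun z => χ z * f0 z, (hχs.mul hf0s).of_le (by simp), ?_, hts.trans hK'Ω, ?_⟩
  · exact HasCompactSupport.of_support_subset_isCompact hK' ((subset_tsupport _).trans hts)
  have hmeas : MeasurableSet (Ω \ K) := ho.measurableSet.diff hK.measurableSet
  rw [withDensity_apply _ hmeas] at hKm
  calc ∫⁻ z, ‖p z - χ z * f0 z‖ₑ ≤
      ∫⁻ z, (‖(p - f0) z‖ₑ + (Ω \ K).indicator (fun z => ‖p z‖ₑ) z) := by
        refine lintegral_mono fun z => ?_
        have hc := hχ z
        by_cases hz : z ∈ Ω \ K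
        · rw [indicator_of_mem hz]
          simp only [← ofReal_norm]
          rw [← ENNReal.ofReal_add (norm_nonneg _) (norm_nonneg _)]
          refine ENNReal.ofReal_le_ofReal ?_
          have : p z - χ z * f0 z = χ z * (p z - f0 z) + (1 - χ z) * p z := by ring
          rw [this]
          refine (norm_add_le _ _).trans (add_le_add ?_ ?_)
          · rw [norm_mul, Real.norm_eq_abs, abs_of_nonneg hc.1]
            exact mul_le_of_le_one_left (norm_nonneg _) hc.2
          · rw [norm_mul, Real.norm_eq_abs, abs_of_nonneg (by linarith [hc.2])]
            exact mul_le_of_le_one_left (norm_nonneg _) (by linarith [hc.1])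
        · rw [indicator_of_notMem hz, add_zero]
          by_cases hzK : z ∈ K
          · rw [hχ1.self_of_nhdsSet z hzK, one_mul]; rfl
          · have : z ∉ Ω := fun h => hz ⟨h, hzK⟩
            rw [hχ0 z (fun h => this (hK'Ω h)), h0 z this]
            simp
    _ = (∫⁻ z, ‖(p - f0) z‖ₑ) + ∫⁻ z in Ω \ K, ‖p z‖ₑ := by
        rw [lintegral_add_left', lintegral_indicator hmeas]
        exact (hp.aestronglyMeasurable.sub hf0s.continuous.aestronglyMeasurable).enorm
    _ ≤ ENNReal.ofReal (η / 2) + ENNReal.ofReal (η / 2) := by gcongr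
    _ = _ := by
        rw [← ENNReal.ofReal_add (by positivity) (by positivity)]
        congr 1; ring

lemma smooth_part (f : ℝ × ℝ → ℝ) (hf : ContDiff ℝ 1 f) (hfc : HasCompactSupport f) (C : ℝ)
    (hC : ∀ z, ‖fderiv ℝ f z (1, 0)‖ ≤ C) (ψ : ℝ × ℝ → ℝ) (L : ℝ≥0) (hψ : LipschitzWith L ψ)
    (N : ℕ) (ε : ℝ) (hε : 0 < ε) (X Y : ℕ → ℝ) (hX : ∀ k, X (k + 1) = X k + ε)
    (hY : ∀ k, Y (k + 1) = Y k + ε)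
    (hz : ∀ z, ψ z ≠ 0 → z.1 ∈ Ioc (X 0) (X N) ∧ z.2 ∈ Ioc (Y 0) (Y N)) :
    |(∫ z, lineDeriv ℝ ψ z (1, 0) * f z) + ∑ k ∈ Finset.range N, ∑ l ∈ Finset.range N,
      ((∫ y in Y l..Y (l + 1), f (X (k + 1), y)) - ∫ y in Y l..Y (l + 1), f (X k, y))
        * ψ (X k, Y l)| ≤ L * ε * C * (N * ε) ^ 2 := by
  set D : ℝ × ℝ → ℝ := fun z => fderiv ℝ f z (1, 0) with hD
  have hDc : Continuous D := (hf.continuous_fderiv one_ne_zero).clm_apply continuous_const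
  have hDs : HasCompactSupport D := hfc.fderiv_apply (𝕜 := ℝ) _
  obtain ⟨K, hK⟩ := ContDiff.lipschitzWith_of_hasCompactSupport hfc hf one_ne_zero
  have hψc := hψ.continuous
  have I0 : ∫ z, lineDeriv ℝ ψ z (1, 0) * f z = - ∫ z, D z * ψ z := by
    rw [hψ.integral_lineDeriv_mul_eq hK hfc, ← integral_neg]
    congr 1
    ext z
    rw [(hf.differentiable one_ne_zero z).lineDeriv_eq_fderiv, map_neg, neg_mul]
  have hXmono : Monotone X := monotone_nat_of_le_succ fun k => by rw [hX]; linarith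
  have hYmono : Monotone Y := monotone_nat_of_le_succ fun k => by rw [hY]; linarith
  have hhc : Continuous fun z => D z * ψ z := hDc.mul hψc
  have hhi : Integrable (fun z => D z * ψ z) (volume.prod volume) :=
    hhc.integrable_of_hasCompactSupport hDs.mul_right
  have cx : ∀ y, Continuous fun x => D (x, y) * ψ (x, y) := fun y => by fun_prop
  have cJ : ∀ a b : ℝ, Continuous fun y => ∫ x in a..b, D (x, y) * ψ (x, y) := fun a b =>
    intervalIntegral.continuous_parametric_intervalIntegral_of_continuous' (by
      simp only [Function.uncurry_def]
      exact hhc.comp (continuous_snd.prodMk continuous_fst)) a b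
  have cJD : ∀ a b : ℝ, Continuous fun y => ∫ x in a..b, D (x, y) := fun a b =>
    intervalIntegral.continuous_parametric_intervalIntegral_of_continuous' (by
      simp only [Function.uncurry_def]
      exact hDc.comp (continuous_snd.prodMk continuous_fst)) a b
  have I1 : ∫ z, D z * ψ z = ∑ k ∈ Finset.range N, ∑ l ∈ Finset.range N,
      ∫ y in Y l..Y (l + 1), ∫ x in X k..X (k + 1), D (x, y) * ψ (x, y) := by
    have e1 : ∫ z, D z * ψ z = ∫ y, ∫ x, D (x, y) * ψ (x, y) :=
      integral_prod_symm _ hhi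
    have e2 : ∀ y, ∫ x, D (x, y) * ψ (x, y) =
        ∑ k ∈ Finset.range N, ∫ x in X k..X (k + 1), D (x, y) * ψ (x, y) := by
      intro y
      rw [intervalIntegral.sum_integral_adjacent_intervals
        (fun k _ => (cx y).intervalIntegrable _ _),
        intervalIntegral.integral_of_le (hXmono (Nat.zero_le N)),
        setIntegral_eq_integral_of_forall_compl_eq_zero]
      intro x hx
      by_contra hne
      exact hx (hz (x, y) (right_ne_zero_of_mul hne)).1
    have e3 : ∫ y, ∫ x, D (x, y) * ψ (x, y) = ∫ y in Y 0..Y N, ∫ x, D (x, y) * ψ (x, y) := by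
      rw [intervalIntegral.integral_of_le (hYmono (Nat.zero_le N)),
        setIntegral_eq_integral_of_forall_compl_eq_zero]
      intro y hy
      have : ∀ x, D (x, y) * ψ (x, y) = 0 := by
        intro x
        by_contra hne
        exact hy (hz (x, y) (right_ne_zero_of_mul hne)).2
      simp [this]
    rw [e1, e3]
    simp only [e2]
    rw [intervalIntegral.integral_finsetSum fun k _ => (cJ _ _).intervalIntegrable _ _]
    refine Finset.sum_congr rfl fun k _ => ?_
    rw [intervalIntegral.sum_integral_adjacent_intervals
      (fun k _ => (cJ _ _).intervalIntegrable _ _)]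
  have I2 : ∀ k l : ℕ, (∫ y in Y l..Y (l + 1), f (X (k + 1), y)) -
      ∫ y in Y l..Y (l + 1), f (X k, y) =
      ∫ y in Y l..Y (l + 1), ∫ x in X k..X (k + 1), D (x, y) := by
    intro k l
    have hfx : ∀ x, Continuous fun y => f (x, y) := fun x =>
      hf.continuous.comp (continuous_const.prodMk continuous_id)
    rw [← intervalIntegral.integral_sub ((hfx _).intervalIntegrable _ _)
      ((hfx _).intervalIntegrable _ _)]
    congr 1
    ext y
    symm
    refine intervalIntegral.integral_eq_sub_of_hasDerivAt (f := fun x => f (x, y)) ?_ ?_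
    · intro x _
      have h1 : HasDerivAt (fun x : ℝ => (x, y)) ((1, 0) : ℝ × ℝ) x :=
        (hasDerivAt_id x).prodMk (hasDerivAt_const x y)
      exact ((hf.differentiable one_ne_zero (x, y)).hasFDerivAt).comp_hasDerivAt x h1
    · exact (hDc.comp (continuous_id.prodMk continuous_const)).intervalIntegrable _ _
  have hcell : ∀ k l : ℕ, |(∫ y in Y l..Y (l + 1), ∫ x in X k..X (k + 1), D (x, y)) * ψ (X k, Y l)
      - ∫ y in Y l..Y (l + 1), ∫ x in X k..X (k + 1), D (x, y) * ψ (x, y)| ≤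
      C * (L * ε) * ε * ε := by
    intro k l
    have c1 : Continuous fun y => (∫ x in X k..X (k + 1), D (x, y)) * ψ (X k, Y l) :=
      (cJD _ _).mul continuous_const
    rw [← intervalIntegral.integral_mul_const, ← intervalIntegral.integral_sub
      (c1.intervalIntegrable _ _) ((cJ _ _).intervalIntegrable _ _)]
    have hlen : |Y (l + 1) - Y l| = ε := by rw [hY, add_sub_cancel_left, abs_of_pos hε]
    have hlen' : |X (k + 1) - X k| = ε := by rw [hX, add_sub_cancel_left, abs_of_pos hε]
    have key : ∀ y ∈ Set.uIoc (Y l) (Y (l + 1)), ‖(∫ x in X k..X (k + 1), D (x, y)) * ψ (X k, Y l) -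
        ∫ x in X k..X (k + 1), D (x, y) * ψ (x, y)‖ ≤ C * (L * ε) * ε := by
      intro y hy
      rw [uIoc_of_le (hYmono (Nat.le_succ l))] at hy
      have cDx : Continuous fun x => D (x, y) := hDc.comp (continuous_id.prodMk continuous_const)
      have c2 : Continuous fun x => D (x, y) * ψ (X k, Y l) := cDx.mul continuous_const
      rw [← intervalIntegral.integral_mul_const, ← intervalIntegral.integral_sub
        (c2.intervalIntegrable _ _) ((cx y).intervalIntegrable _ _)]
      have := intervalIntegral.norm_integral_le_of_norm_le_const (a := X k) (b := X (k + 1))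
        (f := fun x => D (x, y) * ψ (X k, Y l) - D (x, y) * ψ (x, y)) (C := C * (L * ε)) (by
          intro x hx
          rw [uIoc_of_le (hXmono (Nat.le_succ k))] at hx
          rw [← mul_sub, norm_mul]
          refine mul_le_mul (hC _) ?_ (norm_nonneg _) ((norm_nonneg _).trans (hC 0))
          rw [← dist_eq_norm]
          refine (hψ.dist_le_mul _ _).trans (mul_le_mul_of_nonneg_left ?_ L.2)
          rw [Prod.dist_eq, Real.dist_eq, Real.dist_eq]
          simp only [hX, hY] at hx hy
          refine max_le ?_ ?_ <;> rw [abs_le]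
          · constructor <;> linarith [hx.1, hx.2]
          · constructor <;> linarith [hy.1, hy.2])
      rwa [hlen'] at this
    have := intervalIntegral.norm_integral_le_of_norm_le_const key
    rwa [hlen] at this
  rw [I0, I1]
  simp only [I2]
  rw [neg_add_eq_sub, ← Finset.sum_sub_distrib]
  simp only [← Finset.sum_sub_distrib]
  calc _ ≤ ∑ k ∈ Finset.range N, ∑ l ∈ Finset.range N, C * (L * ε) * ε * ε := by
        refine (Finset.abs_sum_le_sum_abs _ _).trans (Finset.sum_le_sum fun k _ => ?_)
        exact (Finset.abs_sum_le_sum_abs _ _).trans (Finset.sum_le_sum fun l _ => hcell k l)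
    _ = _ := by
        simp only [Finset.sum_const, Finset.card_range, nsmul_eq_mul]
        ring


lemma dir_part {Ω : Set (ℝ × ℝ)} (p ps : ℝ × ℝ → ℝ) (hp : Integrable p)
    (hf : ContDiff ℝ 1 ps) (hfc : HasCompactSupport ps) (C : ℝ)
    (hC : ∀ z, ‖fderiv ℝ ps z (1, 0)‖ ≤ C) (η : ℝ) (hη : 0 ≤ η)
    (h1 : ∫⁻ z, ‖p z - ps z‖ₑ ≤ ENNReal.ofReal η)
    (ψ : ℝ × ℝ → ℝ) (L : ℝ≥0) (hψ : LipschitzWith L ψ) (hψ0 : ∀ z, z ∉ Ω → ψ z = 0)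
    (N : ℕ) (ε : ℝ) (hε : 0 < ε) (X Y : ℕ → ℝ) (hX : ∀ k, X (k + 1) = X k + ε)
    (hY : ∀ k, Y (k + 1) = Y k + ε)
    (hΩ : ∀ z, z ∈ Ω → z.1 ∈ Ioo (X 0) (X N) ∧ z.2 ∈ Ioo (Y 0) (Y N))
    (hpX : ∀ k, Integrable fun y => p (X k, y))
    (hE : (∑ k ∈ Finset.range (N + 1), ∫⁻ y, ‖p (X k, y) - ps (X k, y)‖ₑ) * ENNReal.ofReal ε
      ≤ ENNReal.ofReal η)
    (hsm : ∀ k l, ¬ (Icc (X k) (X (k + 1)) ×ˢ Icc (Y l) (Y (l + 1)) ⊆ Ω) →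
      ∀ z ∈ Icc (X k) (X (k + 1)) ×ˢ Icc (Y l) (Y (l + 1)), ps z = 0) :
    |(∫ z, lineDeriv ℝ ψ z (1, 0) * p z) + ∑ k ∈ Finset.range N, ∑ l ∈ Finset.range N,
      (if Icc (X k) (X (k + 1)) ×ˢ Icc (Y l) (Y (l + 1)) ⊆ Ω then
        ((∫ y in Y l..Y (l + 1), p (X (k + 1), y)) - ∫ y in Y l..Y (l + 1), p (X k, y))
        * ψ (X k, Y l) else 0)| ≤ L * (4 * η + C * ε * (N * ε) ^ 2) := by
  have hXmono : Monotone X := monotone_nat_of_le_succ fun k => by rw [hX]; linarith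
  have hYmono : Monotone Y := monotone_nat_of_le_succ fun k => by rw [hY]; linarith
  have hL : (0 : ℝ) ≤ L := L.2
  have hpsi : Integrable ps := hf.continuous.integrable_of_hasCompactSupport hfc
  have hei : Integrable fun z => p z - ps z := hp.sub hpsi
  have hs := smooth_part ps hf hfc C hC ψ L hψ N ε hε X Y hX hY (by
    intro z hz
    have hzΩ : z ∈ Ω := by by_contra h; exact hz (hψ0 z h)
    exact ⟨Ioo_subset_Ioc_self (hΩ z hzΩ).1, Ioo_subset_Ioc_self (hΩ z hzΩ).2⟩)
  -- continuity of slices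
  have hfx : ∀ x, Continuous fun y => ps (x, y) := fun x =>
    hf.continuous.comp (continuous_const.prodMk continuous_id)
  have hpsX : ∀ x, Integrable fun y => ps (x, y) := fun x => by
    refine (hfx x).integrable_of_hasCompactSupport ?_
    refine HasCompactSupport.intro (K := Prod.snd '' tsupport ps) (hfc.isCompact.image continuous_snd) ?_
    intro y hy
    by_contra hne
    exact hy ⟨(x, y), subset_tsupport _ hne, rfl⟩
  have heX : ∀ k, Integrable fun y => p (X k, y) - ps (X k, y) := fun k => (hpX k).sub (hpsX _)
  set Ve : ℕ → ℕ → ℝ := fun k l => ∫ y in Y l..Y (l + 1), (p (X k, y) - ps (X k, y)) with hVe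
  set a : ℕ → ℕ → ℝ := fun k l => ∫ y in Y l..Y (l + 1), ‖p (X k, y) - ps (X k, y)‖ with ha
  set A : ℕ → ℝ := fun k => ∫ y, ‖p (X k, y) - ps (X k, y)‖ with hA
  have hVa : ∀ k l, |Ve k l| ≤ a k l := fun k l => by
    rw [← Real.norm_eq_abs]
    exact intervalIntegral.norm_integral_le_integral_norm
      (f := fun y => p (X k, y) - ps (X k, y)) (hYmono (Nat.le_succ l))
  have ha0 : ∀ k l, 0 ≤ a k l := fun k l => (abs_nonneg _).trans (hVa k l)
  have haA : ∀ k, ∑ l ∈ Finset.range N, a k l ≤ A k := by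
    intro k
    rw [ha]
    simp only
    rw [intervalIntegral.sum_integral_adjacent_intervals
      (fun l _ => (heX k).norm.intervalIntegrable),
      intervalIntegral.integral_of_le (hYmono (Nat.zero_le N))]
    exact setIntegral_le_integral (heX k).norm (Eventually.of_forall fun _ => norm_nonneg _)
  have hA0 : ∀ k, 0 ≤ A k := fun k => integral_nonneg fun _ => norm_nonneg _
  have hAη : (∑ k ∈ Finset.range (N + 1), A k) * ε ≤ η := by
    rw [← ENNReal.ofReal_le_ofReal_iff hη, ENNReal.ofReal_mul' hε.le,
      ENNReal.ofReal_sum_of_nonneg fun k _ => hA0 k]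
    refine le_trans (le_of_eq ?_) hE
    congr 1
    refine Finset.sum_congr rfl fun k _ => ?_
    rw [hA]
    simp only
    rw [ofReal_integral_norm_eq_lintegral_enorm (heX k)]
  have hA1 : (∑ k ∈ Finset.range N, A k) * ε ≤ η := by
    rw [Finset.sum_range_succ] at hAη
    nlinarith [hA0 N]
  have hA2 : (∑ k ∈ Finset.range N, A (k + 1)) * ε ≤ η := by
    rw [Finset.sum_range_succ'] at hAη
    nlinarith [hA0 0]
  -- the derivative part
  have hLD : ∀ z, ‖lineDeriv ℝ ψ z (1, 0)‖ ≤ L := fun z => by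
    have := norm_lineDeriv_le_of_lipschitz ℝ hψ (x₀ := z) (v := ((1, 0) : ℝ × ℝ))
    have h2 : ‖((1, 0) : ℝ × ℝ)‖ = 1 := by simp [Prod.norm_def]
    rwa [h2, mul_one] at this
  have hLDm : AEStronglyMeasurable (fun z => lineDeriv ℝ ψ z ((1, 0) : ℝ × ℝ)) volume :=
    (measurable_lineDeriv hψ.continuous).aestronglyMeasurable
  have hI : ∀ g : ℝ × ℝ → ℝ, Integrable g → Integrable fun z => lineDeriv ℝ ψ z (1, 0) * g z :=
    fun g hg => hg.bdd_mul hLDm (Eventually.of_forall hLD)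
  have T1 : |∫ z, lineDeriv ℝ ψ z (1, 0) * (p z - ps z)| ≤ L * η := by
    calc |∫ z, lineDeriv ℝ ψ z (1, 0) * (p z - ps z)|
        ≤ ∫ z, L * ‖p z - ps z‖ := by
          rw [← Real.norm_eq_abs]
          refine norm_integral_le_of_norm_le (hei.norm.const_mul _) (Eventually.of_forall fun z => ?_)
          rw [norm_mul]
          exact mul_le_mul_of_nonneg_right (hLD z) (norm_nonneg _)
      _ = L * ∫ z, ‖p z - ps z‖ := integral_const_mul _ _
      _ ≤ L * η := by
          refine mul_le_mul_of_nonneg_left ?_ hL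
          rw [← ENNReal.ofReal_le_ofReal_iff hη, ofReal_integral_norm_eq_lintegral_enorm hei]
          exact h1
  have I0 : ∫ z, lineDeriv ℝ ψ z (1, 0) * p z =
      (∫ z, lineDeriv ℝ ψ z (1, 0) * (p z - ps z)) + ∫ z, lineDeriv ℝ ψ z (1, 0) * ps z := by
    rw [← integral_add (hI _ hei) (hI _ hpsi)]
    congr 1
    ext z
    ring
  -- splitting of V
  have hV : ∀ k l, ∫ y in Y l..Y (l + 1), p (X k, y) =
      Ve k l + ∫ y in Y l..Y (l + 1), ps (X k, y) := by
    intro k l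
    rw [hVe]
    simp only
    rw [intervalIntegral.integral_sub (hpX k).intervalIntegrable (hpsX _).intervalIntegrable]
    ring
  -- Abel summation
  have hψX0 : ∀ y, ψ (X 0, y) = 0 := fun y => hψ0 _ fun h => lt_irrefl _ (hΩ _ h).1.1
  have hψXN : ∀ y, ψ (X N, y) = 0 := fun y => hψ0 _ fun h => lt_irrefl _ (hΩ _ h).1.2
  have T3 : |∑ k ∈ Finset.range N, ∑ l ∈ Finset.range N,
      (Ve (k + 1) l - Ve k l) * ψ (X k, Y l)| ≤ L * η := by
    have e1 : ∑ k ∈ Finset.range N, ∑ l ∈ Finset.range N,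
      (Ve (k + 1) l - Ve k l) * ψ (X k, Y l) = - ∑ k ∈ Finset.range N, ∑ l ∈ Finset.range N,
        Ve (k + 1) l * (ψ (X (k + 1), Y l) - ψ (X k, Y l)) := by
      rw [eq_neg_iff_add_eq_zero, ← Finset.sum_add_distrib]
      simp only [← Finset.sum_add_distrib]
      rw [Finset.sum_comm]
      refine Finset.sum_eq_zero fun l _ => ?_
      have := Finset.sum_range_sub (fun k => Ve k l * ψ (X k, Y l)) N
      rw [hψX0, hψXN, mul_zero, mul_zero, sub_zero] at this
      rw [← this]
      refine Finset.sum_congr rfl fun k _ => ?_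
      ring
    rw [e1, abs_neg]
    calc _ ≤ ∑ k ∈ Finset.range N, ∑ l ∈ Finset.range N, a (k + 1) l * (L * ε) := by
          refine (Finset.abs_sum_le_sum_abs _ _).trans (Finset.sum_le_sum fun k _ => ?_)
          refine (Finset.abs_sum_le_sum_abs _ _).trans (Finset.sum_le_sum fun l _ => ?_)
          rw [abs_mul]
          refine mul_le_mul (hVa _ _) ?_ (abs_nonneg _) (ha0 _ _)
          rw [← Real.dist_eq]
          refine (hψ.dist_le_mul _ _).trans (mul_le_mul_of_nonneg_left ?_ hL)
          rw [Prod.dist_eq, hX]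
          simp [abs_of_pos hε, hε.le]
      _ ≤ ∑ k ∈ Finset.range N, A (k + 1) * (L * ε) := by
          refine Finset.sum_le_sum fun k _ => ?_
          rw [← Finset.sum_mul]
          exact mul_le_mul_of_nonneg_right (haA _) (by positivity)
      _ = L * ((∑ k ∈ Finset.range N, A (k + 1)) * ε) := by rw [← Finset.sum_mul]; ring
      _ ≤ L * η := mul_le_mul_of_nonneg_left hA2 hL
  have T4 : |∑ k ∈ Finset.range N, ∑ l ∈ Finset.range N,
      (if Icc (X k) (X (k + 1)) ×ˢ Icc (Y l) (Y (l + 1)) ⊆ Ω then 0 else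
      (Ve (k + 1) l - Ve k l) * ψ (X k, Y l))| ≤ 2 * (L * η) := by
    calc _ ≤ ∑ k ∈ Finset.range N, ∑ l ∈ Finset.range N, (a (k + 1) l + a k l) * (L * ε) := by
          refine (Finset.abs_sum_le_sum_abs _ _).trans (Finset.sum_le_sum fun k _ => ?_)
          refine (Finset.abs_sum_le_sum_abs _ _).trans (Finset.sum_le_sum fun l _ => ?_)
          have hnn : 0 ≤ a (k + 1) l + a k l := add_nonneg (ha0 _ _) (ha0 _ _)
          split_ifs with hc
          · rw [abs_zero]; positivity
          · rw [abs_mul]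
            refine mul_le_mul ((abs_sub _ _).trans (add_le_add (hVa _ _) (hVa _ _))) ?_
              (abs_nonneg _) hnn
            obtain ⟨z, hz, hzΩ⟩ := not_subset.1 hc
            have : |ψ (X k, Y l)| = dist (ψ (X k, Y l)) (ψ z) := by
              rw [hψ0 z hzΩ, Real.dist_eq, sub_zero]
            rw [this]
            refine (hψ.dist_le_mul _ _).trans (mul_le_mul_of_nonneg_left ?_ hL)
            rw [Prod.dist_eq, Real.dist_eq, Real.dist_eq]
            obtain ⟨⟨h3, h4⟩, h5, h6⟩ := hz
            rw [hX] at h4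
            rw [hY] at h6
            refine max_le ?_ ?_ <;> rw [abs_le]
            · constructor <;> linarith
            · constructor <;> linarith
      _ ≤ ∑ k ∈ Finset.range N, (A (k + 1) + A k) * (L * ε) := by
          refine Finset.sum_le_sum fun k _ => ?_
          rw [← Finset.sum_mul, Finset.sum_add_distrib]
          exact mul_le_mul_of_nonneg_right (add_le_add (haA _) (haA _)) (by positivity)
      _ = L * ((∑ k ∈ Finset.range N, A (k + 1)) * ε + (∑ k ∈ Finset.range N, A k) * ε) := by
          rw [← Finset.sum_mul, Finset.sum_add_distrib]; ring
      _ ≤ L * (η + η) := mul_le_mul_of_nonneg_left (add_le_add hA2 hA1) hL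
      _ = _ := by ring
  have hsplit : ∑ k ∈ Finset.range N, ∑ l ∈ Finset.range N,
      (if Icc (X k) (X (k + 1)) ×ˢ Icc (Y l) (Y (l + 1)) ⊆ Ω then
        ((∫ y in Y l..Y (l + 1), p (X (k + 1), y)) - ∫ y in Y l..Y (l + 1), p (X k, y))
        * ψ (X k, Y l) else 0) =
      (∑ k ∈ Finset.range N, ∑ l ∈ Finset.range N,
      ((∫ y in Y l..Y (l + 1), ps (X (k + 1), y)) - ∫ y in Y l..Y (l + 1), ps (X k, y))
        * ψ (X k, Y l)) +
      (∑ k ∈ Finset.range N, ∑ l ∈ Finset.range N, (Ve (k + 1) l - Ve k l) * ψ (X k, Y l)) -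
      ∑ k ∈ Finset.range N, ∑ l ∈ Finset.range N,
      (if Icc (X k) (X (k + 1)) ×ˢ Icc (Y l) (Y (l + 1)) ⊆ Ω then 0 else
      (Ve (k + 1) l - Ve k l) * ψ (X k, Y l)) := by
    rw [← Finset.sum_add_distrib, ← Finset.sum_sub_distrib]
    refine Finset.sum_congr rfl fun k _ => ?_
    rw [← Finset.sum_add_distrib, ← Finset.sum_sub_distrib]
    refine Finset.sum_congr rfl fun l _ => ?_
    rw [hV, hV]
    split_ifs with hc
    · ring
    · have z1 : ∀ x ∈ Icc (X k) (X (k + 1)), ∫ y in Y l..Y (l + 1), ps (x, y) = 0 := by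
        intro x hx
        rw [intervalIntegral.integral_congr (g := fun _ => (0 : ℝ)), intervalIntegral.integral_zero]
        intro y hy
        rw [uIcc_of_le (hYmono (Nat.le_succ l))] at hy
        exact hsm k l hc (x, y) ⟨hx, hy⟩
      rw [z1 _ (left_mem_Icc.2 (hXmono (Nat.le_succ k))),
        z1 _ (right_mem_Icc.2 (hXmono (Nat.le_succ k)))]
      ring
  rw [I0, hsplit]
  rw [abs_le] at T1 T3 T4 hs ⊢
  constructor <;> linarith [T1.1, T1.2, T3.1, T3.2, T4.1, T4.2, hs.1, hs.2]

lemma integral_swap' (f : ℝ × ℝ → ℝ) : ∫ z : ℝ × ℝ, f z.swap = ∫ z, f z :=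
  mp_swap.integral_comp MeasurableEquiv.prodComm.measurableEmbedding f

lemma dir_part' {Ω : Set (ℝ × ℝ)} (q qs : ℝ × ℝ → ℝ) (hq : Integrable q)
    (hf : ContDiff ℝ 1 qs) (hfc : HasCompactSupport qs) (C : ℝ)
    (hC : ∀ z, ‖fderiv ℝ qs z (0, 1)‖ ≤ C) (η : ℝ) (hη : 0 ≤ η)
    (h1 : ∫⁻ z, ‖q z - qs z‖ₑ ≤ ENNReal.ofReal η)
    (ψ : ℝ × ℝ → ℝ) (L : ℝ≥0) (hψ : LipschitzWith L ψ) (hψ0 : ∀ z, z ∉ Ω → ψ z = 0)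
    (N : ℕ) (ε : ℝ) (hε : 0 < ε) (X Y : ℕ → ℝ) (hX : ∀ k, X (k + 1) = X k + ε)
    (hY : ∀ k, Y (k + 1) = Y k + ε)
    (hΩ : ∀ z, z ∈ Ω → z.1 ∈ Ioo (X 0) (X N) ∧ z.2 ∈ Ioo (Y 0) (Y N))
    (hqY : ∀ k, Integrable fun x => q (x, Y k))
    (hE : (∑ k ∈ Finset.range (N + 1), ∫⁻ x, ‖q (x, Y k) - qs (x, Y k)‖ₑ) * ENNReal.ofReal ε
      ≤ ENNReal.ofReal η)
    (hsm : ∀ k l, ¬ (Icc (X k) (X (k + 1)) ×ˢ Icc (Y l) (Y (l + 1)) ⊆ Ω) →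
      ∀ z ∈ Icc (X k) (X (k + 1)) ×ˢ Icc (Y l) (Y (l + 1)), qs z = 0) :
    |(∫ z, lineDeriv ℝ ψ z (0, 1) * q z) + ∑ k ∈ Finset.range N, ∑ l ∈ Finset.range N,
      (if Icc (X k) (X (k + 1)) ×ˢ Icc (Y l) (Y (l + 1)) ⊆ Ω then
        ((∫ x in X k..X (k + 1), q (x, Y (l + 1))) - ∫ x in X k..X (k + 1), q (x, Y l))
        * ψ (X k, Y l) else 0)| ≤ L * (4 * η + C * ε * (N * ε) ^ 2) := by
  have hcell : ∀ k l, (Icc (Y l) (Y (l + 1)) ×ˢ Icc (X k) (X (k + 1)) ⊆ Prod.swap ⁻¹' Ω) ↔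
      (Icc (X k) (X (k + 1)) ×ˢ Icc (Y l) (Y (l + 1)) ⊆ Ω) := by
    intro k l
    constructor
    · intro h z hz
      exact h (a := z.swap) ⟨hz.2, hz.1⟩
    · intro h z hz
      exact h (a := z.swap) ⟨hz.2, hz.1⟩
  have hswl : ∀ z : ℝ × ℝ, HasFDerivAt (Prod.swap : ℝ × ℝ → ℝ × ℝ)
      ((ContinuousLinearMap.snd ℝ ℝ ℝ).prod (ContinuousLinearMap.fst ℝ ℝ ℝ)) z := fun z =>
    ((ContinuousLinearMap.snd ℝ ℝ ℝ).prod (ContinuousLinearMap.fst ℝ ℝ ℝ)).hasFDerivAt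
  have key := dir_part (Ω := Prod.swap ⁻¹' Ω) (fun z => q z.swap) (fun z => qs z.swap)
    (mp_swap.integrable_comp_of_integrable hq)
    (hf.comp (contDiff_snd.prodMk contDiff_fst))
    (hfc.comp_homeomorph (Homeomorph.prodComm ℝ ℝ)) C
    (by
      intro z
      have := ((hf.differentiable one_ne_zero z.swap).hasFDerivAt).comp z (hswl z)
      have e : fderiv ℝ (fun z : ℝ × ℝ => qs z.swap) z = _ := this.fderiv
      rw [e]
      exact hC z.swap)
    η hη ((lintegral_swap' fun z => ‖q z - qs z‖ₑ).trans_le h1)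
    (fun z => ψ z.swap) L
    (by
      refine LipschitzWith.of_dist_le_mul fun a b => (hψ.dist_le_mul _ _).trans (le_of_eq ?_)
      rw [Prod.dist_eq, Prod.dist_eq, max_comm]
      rfl)
    (fun z hz => hψ0 _ hz) N ε hε Y X hY hX (fun z hz => (hΩ _ hz).symm) hqY hE
    (fun k l hkl z hz => hsm l k (fun h => hkl ((hcell _ _).2 h)) z.swap ⟨hz.2, hz.1⟩)
  rw [Finset.sum_comm] at key
  simp only [hcell, Prod.swap_prod_mk] at key
  have e : ∫ z, lineDeriv ℝ (fun z : ℝ × ℝ => ψ z.swap) z (1, 0) * q z.swap =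
      ∫ z, lineDeriv ℝ ψ z (0, 1) * q z := by
    rw [← integral_swap' fun z => lineDeriv ℝ ψ z (0, 1) * q z]
    rfl
  rw [e] at key
  exact key

lemma fderiv_bound (f : ℝ × ℝ → ℝ) (hf : ContDiff ℝ 1 f) (hfc : HasCompactSupport f) (v : ℝ × ℝ) :
    ∃ C : ℝ, ∀ z, ‖fderiv ℝ f z v‖ ≤ C :=
  (hfc.fderiv_apply (𝕜 := ℝ) v).exists_bound_of_continuous
    ((hf.continuous_fderiv one_ne_zero).clm_apply continuous_const)

lemma cell_support {Ω : Set (ℝ × ℝ)} {f : ℝ × ℝ → ℝ} {δ ε : ℝ} (hεδ : ε ≤ δ)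
    (hδ : cthickening δ (tsupport f) ⊆ Ω) {X Y : ℕ → ℝ} (hX : ∀ k, X (k + 1) = X k + ε)
    (hY : ∀ k, Y (k + 1) = Y k + ε) (k l : ℕ)
    (h : ¬ (Icc (X k) (X (k + 1)) ×ˢ Icc (Y l) (Y (l + 1)) ⊆ Ω))
    (z : ℝ × ℝ) (hz : z ∈ Icc (X k) (X (k + 1)) ×ˢ Icc (Y l) (Y (l + 1))) : f z = 0 := by
  by_contra hne
  apply h
  intro w hw
  apply hδ
  refine mem_cthickening_of_dist_le w z δ _ (subset_tsupport _ hne) ?_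
  obtain ⟨⟨h3, h4⟩, h5, h6⟩ := hz
  obtain ⟨⟨k3, k4⟩, k5, k6⟩ := hw
  rw [hX] at h4 k4
  rw [hY] at h6 k6
  rw [Prod.dist_eq, Real.dist_eq, Real.dist_eq]
  refine max_le ?_ ?_ <;> rw [abs_le]
  · constructor <;> linarith
  · constructor <;> linarith

lemma slice_aemeas {f : ℝ × ℝ → ℝ} (hf : Integrable f) :
    AEMeasurable fun x : ℝ => ∫⁻ y : ℝ, ‖f (x, y)‖ₑ :=
  AEMeasurable.lintegral_prod_right' (μ := volume) (ν := volume)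
    (f := fun z : ℝ × ℝ => ‖f z‖ₑ) hf.aestronglyMeasurable.enorm

lemma lintegral_slice {f : ℝ × ℝ → ℝ} (hf : Integrable f) :
    ∫⁻ x : ℝ, ∫⁻ y : ℝ, ‖f (x, y)‖ₑ = ∫⁻ z, ‖f z‖ₑ :=
  (lintegral_prod (μ := volume) (ν := volume) (fun z : ℝ × ℝ => ‖f z‖ₑ)
    hf.aestronglyMeasurable.enorm).symm

set_option maxHeartbeats 1600000 in
theorem plane_approx {Ω : Set (ℝ × ℝ)} (ho : IsOpen Ω) (M : ℝ) (hM : 0 < M)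
    (hΩM : ∀ z ∈ Ω, |z.1| < M / 2 ∧ |z.2| < M / 2)
    {u g1 g2 : ℝ × ℝ → ℂ} (hu : Integrable u)
    (hg1 : Integrable g1) (hg2 : Integrable g2) (hw1 : WeakPart Ω (1, 0) u g1)
    (hw2 : WeakPart Ω (0, 1) u g2) (h1 : ∀ᵐ z, z ∈ Ω → ‖u z‖ = 1) (h0 : ∀ z, z ∉ Ω → u z = 0)
    (η : ℝ) (hη : 0 < η) :
    ∃ (S : Finset (ℕ × ℕ)) (c : ℕ × ℕ → ℝ × ℝ) (n : ℕ × ℕ → ℤ), (∀ i ∈ S, c i ∈ Ω) ∧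
      ∀ (ψ : ℝ × ℝ → ℝ) (L : ℝ≥0), LipschitzWith L ψ → (∀ z, z ∉ Ω → ψ z = 0) →
      |(∫ z, lineDeriv ℝ ψ z (1, 0) * (-(1 / 2) * ((starRingEnd ℂ) (u z) * g2 z).im)) +
        (∫ z, lineDeriv ℝ ψ z (0, 1) * ((1 / 2) * ((starRingEnd ℂ) (u z) * g1 z).im)) -
        Real.pi * ∑ i ∈ S, n i * ψ (c i)| ≤ η * L := by
  set w1 : ℝ × ℝ → ℂ := fun z => (starRingEnd ℂ) (u z) * g1 z with hw1d
  set w2 : ℝ × ℝ → ℂ := fun z => (starRingEnd ℂ) (u z) * g2 z with hw2d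
  have hub : ∀ᵐ z, ‖(starRingEnd ℂ) (u z)‖ ≤ 1 := by
    filter_upwards [h1] with z hz
    rw [RCLike.norm_conj]
    by_cases hzΩ : z ∈ Ω
    · exact (hz hzΩ).le
    · rw [h0 z hzΩ]; simp
  have hum : AEStronglyMeasurable (fun z => (starRingEnd ℂ) (u z)) volume :=
    Complex.continuous_conj.comp_aestronglyMeasurable hu.aestronglyMeasurable
  have hw1i : Integrable w1 := hg1.bdd_mul hum hub
  have hw2i : Integrable w2 := hg2.bdd_mul hum hub
  set p : ℝ × ℝ → ℝ := fun z => -(1 / 2) * (w2 z).im with hp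
  set q : ℝ × ℝ → ℝ := fun z => (1 / 2) * (w1 z).im with hq
  have hpi : Integrable p := (Integrable.im hw2i).const_mul _
  have hqi : Integrable q := (Integrable.im hw1i).const_mul _
  have hp0 : ∀ z, z ∉ Ω → p z = 0 := fun z hz => by simp [hp, hw2d, h0 z hz]
  have hq0 : ∀ z, z ∉ Ω → q z = 0 := fun z hz => by simp [hq, hw1d, h0 z hz]
  obtain ⟨ps, psd, psc, pss, hps⟩ := smooth_approx ho p hpi hp0 (η / 16) (by positivity)
  obtain ⟨qs, qsd, qsc, qss, hqs⟩ := smooth_approx ho q hqi hq0 (η / 16) (by positivity)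
  obtain ⟨C1, hC1⟩ := fderiv_bound ps psd psc (1, 0)
  obtain ⟨C2, hC2⟩ := fderiv_bound qs qsd qsc (0, 1)
  have hC10 : 0 ≤ C1 := (norm_nonneg _).trans (hC1 0)
  have hC20 : 0 ≤ C2 := (norm_nonneg _).trans (hC2 0)
  obtain ⟨δ1, hδ1, hδ1'⟩ := psc.isCompact.exists_cthickening_subset_open ho pss
  obtain ⟨δ2, hδ2, hδ2'⟩ := qsc.isCompact.exists_cthickening_subset_open ho qss
  -- mesh size
  have hT : 0 < min (min δ1 δ2) (min (M / 2) (η / (16 * (C1 + C2 + 1) * M ^ 2))) := by positivity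
  obtain ⟨N, hN⟩ := exists_nat_gt
    (2 * M / min (min δ1 δ2) (min (M / 2) (η / (16 * (C1 + C2 + 1) * M ^ 2))))
  have hN0 : (0 : ℝ) < N := lt_trans (by positivity) hN
  set ε : ℝ := 2 * M / N with hεd
  have hε : 0 < ε := by positivity
  have hNε : N * ε = 2 * M := by rw [hεd]; field_simp
  have hεT : ε < min (min δ1 δ2) (min (M / 2) (η / (16 * (C1 + C2 + 1) * M ^ 2))) := by
    rw [hεd, div_lt_iff₀ hN0, ← div_lt_iff₀' hT]
    exact hN
  simp only [lt_min_iff] at hεT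
  obtain ⟨⟨hε1, hε2⟩, hε3, hε4⟩ := hεT
  have hCε : (C1 + C2) * ε * (N * ε) ^ 2 ≤ η / 4 := by
    rw [hNε]
    rw [lt_div_iff₀ (by positivity)] at hε4
    have : 0 ≤ ε * M ^ 2 := by positivity
    nlinarith
  obtain ⟨φ, hφ, bu, b1, b2⟩ := exists_bumps u g1 g2 hu hg1 hg2
  -- choice of the vertical lines
  have pe : Integrable fun z => p z - ps z := hpi.sub (psd.continuous.integrable_of_hasCompactSupport psc)
  have qe : Integrable fun z => q z - qs z := hqi.sub (qsd.continuous.integrable_of_hasCompactSupport qsc)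
  have qe' : Integrable fun z : ℝ × ℝ => q z.swap - qs z.swap := mp_swap.integrable_comp_of_integrable qe
  obtain ⟨s, hs, hsP, hsE⟩ := choose_shift (fun x => ∫⁻ y, ‖p (x, y) - ps (x, y)‖ₑ)
    (slice_aemeas pe) ε hε (-M) (N + 1)
    (fun x => GoodLine Ω u g2 φ (fun y => (x, y)) ∧ Integrable fun y => w2 (x, y))
    ((ae_goodLine_v hu hg2 h1 φ bu b2).and
      (Integrable.prod_right_ae (μ := (volume : Measure ℝ)) (ν := (volume : Measure ℝ)) hw2i))
  obtain ⟨r, hr, hrP, hrE⟩ := choose_shift (fun y => ∫⁻ x, ‖q (x, y) - qs (x, y)‖ₑ)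
    (slice_aemeas qe') ε hε (-M) (N + 1)
    (fun y => GoodLine Ω u g1 φ (fun x => (x, y)) ∧ Integrable fun x => w1 (x, y))
    ((ae_goodLine_h hu hg1 h1 φ bu b1).and
      (Integrable.prod_left_ae (μ := (volume : Measure ℝ)) (ν := (volume : Measure ℝ)) hw1i))
  have hsE' := hsE.trans ((lintegral_slice pe).trans_le hps)
  have hrE' := hrE.trans (((lintegral_slice qe').trans
    (lintegral_swap' fun z => ‖q z - qs z‖ₑ)).trans_le hqs)
  set X : ℕ → ℝ := fun k => -M + s + ε * k with hX
  set Y : ℕ → ℝ := fun k => -M + r + ε * k with hY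
  have hX1 : ∀ k, X (k + 1) = X k + ε := fun k => by simp only [hX]; push_cast; ring
  have hY1 : ∀ k, Y (k + 1) = Y k + ε := fun k => by simp only [hY]; push_cast; ring
  have hbox : ∀ z, z ∈ Ω → z.1 ∈ Ioo (X 0) (X N) ∧ z.2 ∈ Ioo (Y 0) (Y N) := by
    intro z hz
    obtain ⟨a1, a2⟩ := hΩM z hz
    rw [abs_lt] at a1 a2
    have e : ε * N = 2 * M := by rw [mul_comm, hNε]
    have := hs.1; have := hs.2; have := hr.1; have := hr.2
    simp only [hX, hY, e]
    refine ⟨⟨?_, ?_⟩, ?_, ?_⟩ <;> (try push_cast) <;> linarith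
  -- the integers
  have hcell : ∀ k l, Icc (X k) (X (k + 1)) ×ˢ Icc (Y l) (Y (l + 1)) ⊆ Ω → ∃ n : ℤ,
      ((∫ y in Y l..Y (l + 1), p (X (k + 1), y)) - ∫ y in Y l..Y (l + 1), p (X k, y)) +
      ((∫ x in X k..X (k + 1), q (x, Y (l + 1))) - ∫ x in X k..X (k + 1), q (x, Y l)) =
      - (Real.pi * n) := by
    intro k l hkl
    obtain ⟨n, hn⟩ := cell_int ho hu hg1 hg2 hw1 hw2 φ hφ (x0 := X k) (x1 := X (k + 1))
      (y0 := Y l) (y1 := Y (l + 1)) (by rw [hX1]; linarith) (by rw [hY1]; linarith) hkl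
      (hsP k).1 (hsP (k + 1)).1 (hrP l).1 (hrP (l + 1)).1
    refine ⟨n, ?_⟩
    have ep : ∀ k l, ∫ y in Y l..Y (l + 1), p (X k, y) =
        -(1 / 2) * (∫ y in Y l..Y (l + 1), w2 (X k, y)).im := by
      intro k l
      have := Complex.imCLM.intervalIntegral_comp_comm (a := Y l) (b := Y (l + 1))
        (hsP k).2.intervalIntegrable
      simp only [Complex.imCLM_apply] at this
      rw [← this, ← intervalIntegral.integral_const_mul]
    have eq : ∀ k l, ∫ x in X k..X (k + 1), q (x, Y l) =
        (1 / 2) * (∫ x in X k..X (k + 1), w1 (x, Y l)).im := by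
      intro k l
      have := Complex.imCLM.intervalIntegral_comp_comm (a := X k) (b := X (k + 1))
        (hrP l).2.intervalIntegrable
      simp only [Complex.imCLM_apply] at this
      rw [← this, ← intervalIntegral.integral_const_mul]
    rw [ep, ep, eq, eq]
    have := congrArg Complex.im hn
    have e3 : ((n : ℂ) * (2 * Real.pi * Complex.I)).im = n * (2 * Real.pi) := by
      simp
    rw [e3] at this
    simp only [Complex.add_im, Complex.sub_im] at this
    linarith
  choose! n hn using hcell
  refine ⟨(Finset.range N ×ˢ Finset.range N).filter fun i =>
    Icc (X i.1) (X (i.1 + 1)) ×ˢ Icc (Y i.2) (Y (i.2 + 1)) ⊆ Ω,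
    fun i => (X i.1, Y i.2), fun i => n i.1 i.2, ?_, ?_⟩
  · intro i hi
    refine (Finset.mem_filter.1 hi).2 ⟨left_mem_Icc.2 ?_, left_mem_Icc.2 ?_⟩
    · show X i.1 ≤ _; rw [hX1]; linarith
    · show Y i.2 ≤ _; rw [hY1]; linarith
  intro ψ L hψ hψ0
  have k1 := dir_part p ps hpi psd psc C1 hC1 (η / 16) (by positivity) hps ψ L hψ hψ0 N ε hε X Y
    hX1 hY1 hbox (fun k => (Integrable.im (hsP k).2).const_mul _) hsE'
    (cell_support hε1.le hδ1' hX1 hY1)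
  have k2 := dir_part' q qs hqi qsd qsc C2 hC2 (η / 16) (by positivity) hqs ψ L hψ hψ0 N ε hε X Y
    hX1 hY1 hbox (fun k => (Integrable.im (hrP k).2).const_mul _) hrE'
    (cell_support hε2.le hδ2' hX1 hY1)
  have hsum : (∑ k ∈ Finset.range N, ∑ l ∈ Finset.range N,
      (if Icc (X k) (X (k + 1)) ×ˢ Icc (Y l) (Y (l + 1)) ⊆ Ω then
        ((∫ y in Y l..Y (l + 1), p (X (k + 1), y)) - ∫ y in Y l..Y (l + 1), p (X k, y))
        * ψ (X k, Y l) else 0)) + (∑ k ∈ Finset.range N, ∑ l ∈ Finset.range N,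
      (if Icc (X k) (X (k + 1)) ×ˢ Icc (Y l) (Y (l + 1)) ⊆ Ω then
        ((∫ x in X k..X (k + 1), q (x, Y (l + 1))) - ∫ x in X k..X (k + 1), q (x, Y l))
        * ψ (X k, Y l) else 0)) =
      - (Real.pi * ∑ i ∈ (Finset.range N ×ˢ Finset.range N).filter fun i =>
        Icc (X i.1) (X (i.1 + 1)) ×ˢ Icc (Y i.2) (Y (i.2 + 1)) ⊆ Ω,
        (n i.1 i.2 : ℝ) * ψ (X i.1, Y i.2)) := by
    rw [Finset.sum_filter, Finset.sum_product, ← Finset.sum_add_distrib, Finset.mul_sum,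
      ← Finset.sum_neg_distrib]
    refine Finset.sum_congr rfl fun k _ => ?_
    rw [← Finset.sum_add_distrib, Finset.mul_sum, ← Finset.sum_neg_distrib]
    refine Finset.sum_congr rfl fun l _ => ?_
    by_cases hc : Icc (X k) (X (k + 1)) ×ˢ Icc (Y l) (Y (l + 1)) ⊆ Ω
    · simp only [if_pos hc]
      rw [← add_mul, hn k l hc]
      ring
    · simp only [if_neg hc]
      ring
  have hL : (0 : ℝ) ≤ L := L.2
  have hfin : (L : ℝ) * (4 * (η / 16) + C1 * ε * (N * ε) ^ 2) +
      L * (4 * (η / 16) + C2 * ε * (N * ε) ^ 2) ≤ η * L := by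
    have : (L : ℝ) * ((C1 + C2) * ε * (N * ε) ^ 2) ≤ L * (η / 4) := mul_le_mul_of_nonneg_left hCε hL
    nlinarith
  rw [abs_le] at k1 k2 ⊢
  constructor <;> linarith [k1.1, k1.2, k2.1, k2.2]

/-- The linear identification of the Euclidean plane with `ℝ × ℝ`. -/
def planeE : R2 ≃L[ℝ] ℝ × ℝ :=
  (EuclideanSpace.equiv (Fin 2) ℝ).trans (ContinuousLinearEquiv.finTwoArrow ℝ ℝ)

lemma planeE_apply (x : R2) : planeE x = (x 0, x 1) := rfl

lemma planeE_mp : MeasurePreserving planeE volume volume :=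
  (volume_preserving_finTwoArrow ℝ).comp (PiLp.volume_preserving_ofLp (Fin 2))

lemma planeE_me : MeasurableEmbedding planeE :=
  planeE.toHomeomorph.measurableEmbedding

lemma planeE_e0 : planeE (EuclideanSpace.single 0 1) = (1, 0) := by
  rw [planeE_apply]; simp

lemma planeE_e1 : planeE (EuclideanSpace.single 1 1) = (0, 1) := by
  rw [planeE_apply]; simp

lemma planeE_symm_mp : MeasurePreserving planeE.symm volume volume :=
  planeE_mp.symm planeE.toHomeomorph.toMeasurableEquiv

lemma planeE_integral {F : Type*} [NormedAddCommGroup F] [NormedSpace ℝ F] (f : ℝ × ℝ → F) :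
    ∫ z, f z = ∫ x : R2, f (planeE x) :=
  (planeE_mp.integral_comp planeE_me f).symm

lemma planeE_symm_dist (z w : ℝ × ℝ) : dist (planeE.symm z) (planeE.symm w) ≤ 2 * dist z w := by
  obtain ⟨a, rfl⟩ := planeE.surjective z
  obtain ⟨b, rfl⟩ := planeE.surjective w
  rw [planeE.symm_apply_apply, planeE.symm_apply_apply, planeE_apply, planeE_apply, Prod.dist_eq,
    EuclideanSpace.dist_eq, Fin.sum_univ_two]
  refine Real.sqrt_le_iff.2 ⟨by positivity, ?_⟩
  simp only
  have h1 := le_max_left (dist (a 0) (b 0)) (dist (a 1) (b 1))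
  have h2 := le_max_right (dist (a 0) (b 0)) (dist (a 1) (b 1))
  have h3 : 0 ≤ dist (a 0) (b 0) := dist_nonneg
  have h4 : 0 ≤ dist (a 1) (b 1) := dist_nonneg
  nlinarith

lemma cplx_int {α : Type*} [MeasurableSpace α] {μ : Measure α} {a b : α → ℝ} (ha : Integrable a μ)
    (hb : Integrable b μ) : Integrable (fun x => (a x : ℂ) + b x * Complex.I) μ ∧
    ∫ x, ((a x : ℂ) + b x * Complex.I) ∂μ = ((∫ x, a x ∂μ : ℝ) : ℂ) + (∫ x, b x ∂μ : ℝ) * Complex.I := by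
  have h1 : Integrable (fun x => (a x : ℂ)) μ := ha.ofReal
  have h2 : Integrable (fun x => (b x : ℂ) * Complex.I) μ := (Integrable.ofReal hb).mul_const _
  refine ⟨h1.add h2, ?_⟩
  rw [integral_add h1 h2, integral_mul_const]
  congr 1
  · exact integral_ofReal
  · congr 1
    exact integral_ofReal

/-- Complexification of the first two components, extended by zero. -/
def cpx (Ω : Set R2) (a b : R2 → ℝ) (z : ℝ × ℝ) : ℂ :=
  Ω.indicator (fun x => (a x : ℂ) + b x * Complex.I) (planeE.symm z)

lemma cpx_planeE (Ω : Set R2) (a b : R2 → ℝ) (x : R2) : cpx Ω a b (planeE x) =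
    Ω.indicator (fun x => (a x : ℂ) + b x * Complex.I) x := by
  rw [cpx, planeE.symm_apply_apply]

lemma cpx_integrable {Ω : Set R2} (ho : IsOpen Ω) {a b : R2 → ℝ} (ha : IntegrableOn a Ω)
    (hb : IntegrableOn b Ω) : Integrable (cpx Ω a b) :=
  planeE_symm_mp.integrable_comp_of_integrable
    ((integrable_indicator_iff ho.measurableSet).2 (cplx_int ha hb).1)

lemma weak_transport {Ω : Set R2} (ho : IsOpen Ω) {u : R2 → R2} {G : R2 → Matrix (Fin 2) (Fin 2) ℝ}
    (hu : MemW11 Ω u G) (hui : ∀ i, IntegrableOn (fun x => u x i) Ω) (j : Fin 2) (v : ℝ × ℝ)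
    (hv : planeE (EuclideanSpace.single j 1) = v) :
    WeakPart (planeE.symm ⁻¹' Ω) v (cpx Ω (fun x => u x 0) fun x => u x 1)
      (cpx Ω (fun x => G x 0 j) fun x => G x 1 j) := by
  intro φ hφ hφc hφs
  have hΦ : ContDiff ℝ (⊤ : ℕ∞) (φ ∘ planeE) := hφ.comp planeE.contDiff
  have hΦc : HasCompactSupport (φ ∘ planeE) := hφc.comp_homeomorph planeE.toHomeomorph
  have hΦs : tsupport (φ ∘ planeE) ⊆ Ω := by
    have e : tsupport (φ ∘ planeE) = planeE ⁻¹' tsupport φ :=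
      tsupport_comp_eq_preimage φ planeE.toHomeomorph
    rw [e]
    intro x hx
    have := hφs hx
    simpa using this
  have hd : ∀ x, fderiv ℝ φ (planeE x) v = fderiv ℝ (φ ∘ planeE) x (EuclideanSpace.single j 1) := by
    intro x
    rw [fderiv_comp x (hφ.differentiable (by simp) _) planeE.differentiableAt, planeE.fderiv, ← hv]
    rfl
  set D : R2 → ℝ := fun x => fderiv ℝ (φ ∘ planeE) x (EuclideanSpace.single j 1) with hD
  have hDc : Continuous D := (hΦ.continuous_fderiv (by simp)).clm_apply continuous_const
  have hDs : HasCompactSupport D := hΦc.fderiv_apply (𝕜 := ℝ) _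
  obtain ⟨C, hC⟩ := hDs.exists_bound_of_continuous hDc
  obtain ⟨C', hC'⟩ := hΦc.exists_bound_of_continuous hΦ.continuous
  have i1 : ∀ i, Integrable (fun x => u x i * D x) (volume.restrict Ω) := fun i =>
    (hui i).mul_bdd hDc.aestronglyMeasurable (Eventually.of_forall hC)
  have i2 : ∀ i, Integrable (fun x => G x i j * (φ ∘ planeE) x) (volume.restrict Ω) := fun i =>
    (hu.2.1 i j).mul_bdd hΦ.continuous.aestronglyMeasurable (Eventually.of_forall hC')
  have key := hu.2.2 (φ ∘ planeE) hΦ hΦc hΦs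
  rw [planeE_integral, planeE_integral]
  have e1 : ∫ x : R2, (fderiv ℝ φ (planeE x) v) • cpx Ω (fun x => u x 0) (fun x => u x 1) (planeE x) =
      ∫ x in Ω, (((u x 0 * D x : ℝ) : ℂ) + (u x 1 * D x : ℝ) * Complex.I) := by
    rw [← integral_indicator ho.measurableSet]
    congr 1
    ext x
    rw [cpx_planeE, hd]
    by_cases hx : x ∈ Ω
    · simp only [indicator_of_mem hx, Complex.real_smul]
      push_cast
      ring
    · simp only [indicator_of_notMem hx, smul_zero]
  have e2 : ∫ x : R2, φ (planeE x) • cpx Ω (fun x => G x 0 j) (fun x => G x 1 j) (planeE x) =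
      ∫ x in Ω, (((G x 0 j * (φ ∘ planeE) x : ℝ) : ℂ) + (G x 1 j * (φ ∘ planeE) x : ℝ) * Complex.I) := by
    rw [← integral_indicator ho.measurableSet]
    congr 1
    ext x
    rw [cpx_planeE]
    by_cases hx : x ∈ Ω
    · simp only [indicator_of_mem hx, Complex.real_smul, Function.comp]
      push_cast
      ring
    · simp only [indicator_of_notMem hx, smul_zero]
  rw [e1, e2, (cplx_int (i1 0) (i1 1)).2, (cplx_int (i2 0) (i2 1)).2, key 0 j, key 1 j]
  push_cast
  ring

lemma zero_ext_lip {Ω : Set R2} (ho : IsOpen Ω) {φ : R2 → ℝ} {L : ℝ≥0}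
    (hL : LipschitzOnWith L φ (closure Ω)) (h0 : ∀ p ∈ frontier Ω, φ p = 0) :
    LipschitzWith L (Ω.indicator φ) := by
  have key : ∀ x ∈ Ω, ∀ y, y ∉ Ω → |φ x| ≤ L * dist x y := by
    intro x hx y hy
    obtain ⟨w, hws, hwf⟩ : ∃ w ∈ segment ℝ x y, w ∈ frontier Ω := by
      by_contra! hcon
      have hpre := (convex_segment (𝕜 := ℝ) x y).isPreconnected
      have hcl : ∀ w ∈ segment ℝ x y, w ∉ Ω → w ∈ (closure Ω)ᶜ := by
        intro w hw hwΩ hwc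
        exact hcon w hw ⟨hwc, fun h => hwΩ (interior_subset h)⟩
      obtain ⟨w, -, hw1, hw2⟩ := hpre Ω (closure Ω)ᶜ ho isClosed_closure.isOpen_compl
        (fun w hw => by
          by_cases h : w ∈ Ω
          · exact Or.inl h
          · exact Or.inr (hcl w hw h))
        ⟨x, left_mem_segment ℝ x y, hx⟩
        ⟨y, right_mem_segment ℝ x y, hcl y (right_mem_segment ℝ x y) hy⟩
      exact hw2 (subset_closure hw1)
    have h1 := hL.dist_le_mul x (subset_closure hx) w (frontier_subset_closure hwf)
    rw [h0 w hwf, Real.dist_eq, sub_zero] at h1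
    have h2 := dist_add_dist_of_mem_segment hws
    have h3 : dist x w ≤ dist x y := by linarith [dist_nonneg (x := w) (y := y)]
    exact h1.trans (mul_le_mul_of_nonneg_left h3 L.2)
  refine LipschitzWith.of_dist_le_mul fun x y => ?_
  by_cases hx : x ∈ Ω <;> by_cases hy : y ∈ Ω
  · rw [indicator_of_mem hx, indicator_of_mem hy]
    exact hL.dist_le_mul x (subset_closure hx) y (subset_closure hy)
  · rw [indicator_of_mem hx, indicator_of_notMem hy, Real.dist_eq, sub_zero]
    exact key x hx y hy
  · rw [indicator_of_notMem hx, indicator_of_mem hy, dist_comm, Real.dist_eq, sub_zero, dist_comm]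
    exact key y hy x hx
  · rw [indicator_of_notMem hx, indicator_of_notMem hy, dist_self]
    positivity

lemma list_of_sum {ι : Type*} (S : Finset ι) (c : ι → R2) (n : ι → ℤ) (Ω : Set R2)
    (hc : ∀ i ∈ S, c i ∈ Ω) : ∃ A B : List R2, (∀ x ∈ A, x ∈ Ω) ∧ (∀ x ∈ B, x ∈ Ω) ∧
      ∀ φ : R2 → ℝ, (A.map φ).sum - (B.map φ).sum = ∑ i ∈ S, n i * φ (c i) := by
  induction S using Finset.induction_on with
  | empty => exact ⟨[], [], by simp, by simp, by simp⟩
  | insert a S ha ih =>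
    obtain ⟨A, B, hA, hB, h⟩ := ih fun i hi => hc i (Finset.mem_insert_of_mem hi)
    have hca := hc a (Finset.mem_insert_self _ _)
    refine ⟨List.replicate (n a).toNat (c a) ++ A, List.replicate (-n a).toNat (c a) ++ B, ?_, ?_, ?_⟩
    · intro x hx
      rcases List.mem_append.1 hx with h | h
      · rw [List.eq_of_mem_replicate h]; exact hca
      · exact hA x h
    · intro x hx
      rcases List.mem_append.1 hx with h | h
      · rw [List.eq_of_mem_replicate h]; exact hca
      · exact hB x h
    · intro φ
      rw [Finset.sum_insert ha, ← h φ]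
      simp only [List.map_append, List.sum_append, List.map_replicate, List.sum_replicate,
        nsmul_eq_mul]
      have e : (((n a).toNat : ℤ) : ℝ) - (((-n a).toNat : ℤ) : ℝ) = n a := by
        rw [← Int.cast_sub, Int.toNat_sub_toNat_neg]
      simp only [Int.cast_natCast] at e
      rw [← e]
      ring

theorem approx_R2 {Ω : Set R2} (ho : IsOpen Ω) (hb : Bornology.IsBounded Ω)
    {u : R2 → R2} {G : R2 → Matrix (Fin 2) (Fin 2) ℝ}
    (hu : MemW11 Ω u G) (hS : SphereValued Ω u) (η : ℝ) (hη : 0 < η) :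
    ∃ A B : List R2, (∀ x ∈ A, x ∈ Ω) ∧ (∀ x ∈ B, x ∈ Ω) ∧
      ∀ (φ : R2 → ℝ) (L : ℝ≥0), LipschitzOnWith L φ (closure Ω) → (∀ p ∈ frontier Ω, φ p = 0) →
      |detPairing Ω u G φ - Real.pi * ((A.map φ).sum - (B.map φ).sum)| ≤ η * L := by
  have hui : ∀ i, IntegrableOn (fun x => u x i) Ω := fun i =>
    (EuclideanSpace.proj i : R2 →L[ℝ] ℝ).integrable_comp hu.1
  have hub : ∀ i, ∀ᵐ x ∂(volume.restrict Ω), ‖u x i‖ ≤ 1 := fun i => by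
    filter_upwards [hS] with x hx
    rw [← hx]
    exact PiLp.norm_apply_le (u x) i
  have huG : ∀ i k j, Integrable (fun x => u x i * G x k j) (volume.restrict Ω) := fun i k j =>
    (hu.2.1 k j).bdd_mul (hui i).aestronglyMeasurable (hub i)
  obtain ⟨M0, hM0⟩ := hb.exists_norm_le
  set M : ℝ := 2 * (|M0| + 1) with hM
  have hMpos : 0 < M := by positivity
  have hbox : ∀ z ∈ planeE.symm ⁻¹' Ω, |z.1| < M / 2 ∧ |z.2| < M / 2 := by
    intro z hz
    obtain ⟨x, rfl⟩ := planeE.surjective z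
    have hx : x ∈ Ω := by simpa using hz
    have h1 := hM0 x hx
    have h2 := le_abs_self M0
    have h3 := PiLp.norm_apply_le x 0
    have h4 := PiLp.norm_apply_le x 1
    rw [Real.norm_eq_abs] at h3 h4
    rw [planeE_apply]
    constructor
    · show |x 0| < M / 2
      linarith
    · show |x 1| < M / 2
      linarith
  set U := cpx Ω (fun x => u x 0) fun x => u x 1 with hU
  set g1 := cpx Ω (fun x => G x 0 0) fun x => G x 1 0 with hg1
  set g2 := cpx Ω (fun x => G x 0 1) fun x => G x 1 1 with hg2
  have hU1 : ∀ᵐ z, z ∈ planeE.symm ⁻¹' Ω → ‖U z‖ = 1 := by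
    have h : ∀ᵐ x : R2, x ∈ Ω → ‖u x‖ = 1 := (ae_restrict_iff' ho.measurableSet).1 hS
    have h' := planeE_symm_mp.quasiMeasurePreserving.ae h
    filter_upwards [h'] with z hz hzΩ
    change planeE.symm z ∈ Ω at hzΩ
    have := hz hzΩ
    rw [hU, cpx, indicator_of_mem hzΩ, Complex.norm_add_mul_I]
    rw [EuclideanSpace.norm_eq, Fin.sum_univ_two] at this
    simpa [sq_abs] using this
  have hU0 : ∀ z, z ∉ planeE.symm ⁻¹' Ω → U z = 0 := fun z hz => by
    change planeE.symm z ∉ Ω at hz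
    rw [hU, cpx, indicator_of_notMem hz]
  obtain ⟨S, c, n, hcS, happ⟩ := plane_approx (ho.preimage planeE.symm.continuous) M hMpos hbox
    (cpx_integrable ho (hui 0) (hui 1)) (cpx_integrable ho (hu.2.1 0 0) (hu.2.1 1 0))
    (cpx_integrable ho (hu.2.1 0 1) (hu.2.1 1 1))
    (weak_transport ho hu hui 0 _ planeE_e0) (weak_transport ho hu hui 1 _ planeE_e1)
    hU1 hU0 (η / 2) (by positivity)
  obtain ⟨A, B, hA, hB, hAB⟩ := list_of_sum S (fun i => planeE.symm (c i)) n Ω hcS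
  refine ⟨A, B, hA, hB, fun φ L hφ hφ0 => ?_⟩
  set ψ := Ω.indicator φ with hψd
  have hψ : LipschitzWith L ψ := zero_ext_lip ho hφ hφ0
  have key := happ (fun z => ψ (planeE.symm z)) (2 * L) (by
      refine LipschitzWith.of_dist_le_mul fun z w => (hψ.dist_le_mul _ _).trans ?_
      push_cast
      have := mul_le_mul_of_nonneg_left (planeE_symm_dist z w) L.2
      have e : ((2 : ℝ) * L) * dist z w = L * (2 * dist z w) := by ring
      rw [e]
      exact this)
    (fun z hz => indicator_of_notMem (a := planeE.symm z) hz _)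
  rw [hAB φ]
  have hsum : ∑ i ∈ S, (n i : ℝ) * ψ (planeE.symm (c i)) = ∑ i ∈ S, n i * φ (planeE.symm (c i)) :=
    Finset.sum_congr rfl fun i hi => by rw [hψd, indicator_of_mem (s := Ω) (a := planeE.symm (c i)) (hcS i hi)]
  rw [hsum] at key
  have hld : ∀ (x : R2) (v : R2), lineDeriv ℝ (fun z => ψ (planeE.symm z)) (planeE x) (planeE v) =
      lineDeriv ℝ ψ x v := by
    intro x v
    unfold lineDeriv
    congr 1
    ext t
    rw [← map_smul, ← map_add]
    show ψ (planeE.symm (planeE (x + t • v))) = _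
    rw [planeE.symm_apply_apply]
  have hLDm : ∀ v, AEStronglyMeasurable (fun x => lineDeriv ℝ ψ x v) (volume.restrict Ω) := fun v =>
    (measurable_lineDeriv hψ.continuous).aestronglyMeasurable
  have hLDb : ∀ v : R2, ∀ᵐ x ∂(volume.restrict Ω), ‖lineDeriv ℝ ψ x v‖ ≤ L * ‖v‖ := fun v =>
    Eventually.of_forall fun x => norm_lineDeriv_le_of_lipschitz ℝ hψ
  have hlam : ∀ j, Integrable (fun x => lambdaVec u G x j) (volume.restrict Ω) := by
    intro j
    fin_cases j
    · have := (((huG 0 1 1).neg).add (huG 1 0 1)).const_mul (1 / 2)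
      refine this.congr (Eventually.of_forall fun x => ?_)
      simp [lambdaVec]
    · have := ((huG 0 1 0).sub (huG 1 0 0)).const_mul (1 / 2)
      refine this.congr (Eventually.of_forall fun x => ?_)
      simp [lambdaVec]
  have hterm : ∀ j, Integrable (fun x => lineDeriv ℝ ψ x (EuclideanSpace.single j 1) *
      lambdaVec u G x j) (volume.restrict Ω) := fun j =>
    (hlam j).bdd_mul (hLDm _) (hLDb _)
  have E1 : ∫ z, lineDeriv ℝ (fun z => ψ (planeE.symm z)) z (1, 0) *
      (-(1 / 2) * ((starRingEnd ℂ) (U z) * g2 z).im) =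
      ∫ x in Ω, lineDeriv ℝ ψ x (EuclideanSpace.single 0 1) * lambdaVec u G x 0 := by
    rw [planeE_integral, ← integral_indicator ho.measurableSet]
    congr 1
    ext x
    rw [← planeE_e0, hld, hU, hg2, cpx_planeE, cpx_planeE]
    by_cases hx : x ∈ Ω
    · simp only [indicator_of_mem hx]
      congr 1
      simp [lambdaVec]
      ring
    · simp only [indicator_of_notMem hx]
      simp
  have E2 : ∫ z, lineDeriv ℝ (fun z => ψ (planeE.symm z)) z (0, 1) *
      ((1 / 2) * ((starRingEnd ℂ) (U z) * g1 z).im) =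
      ∫ x in Ω, lineDeriv ℝ ψ x (EuclideanSpace.single 1 1) * lambdaVec u G x 1 := by
    rw [planeE_integral, ← integral_indicator ho.measurableSet]
    congr 1
    ext x
    rw [← planeE_e1, hld, hU, hg1, cpx_planeE, cpx_planeE]
    by_cases hx : x ∈ Ω
    · simp only [indicator_of_mem hx]
      congr 1
      simp [lambdaVec]
      ring
    · simp only [indicator_of_notMem hx]
      simp
  have E3 : detPairing Ω u G φ =
      (∫ x in Ω, lineDeriv ℝ ψ x (EuclideanSpace.single 0 1) * lambdaVec u G x 0) +
      ∫ x in Ω, lineDeriv ℝ ψ x (EuclideanSpace.single 1 1) * lambdaVec u G x 1 := by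
    rw [← integral_add (hterm 0) (hterm 1), detPairing]
    refine integral_congr_ae ?_
    have hdiff : ∀ᵐ x ∂(volume.restrict Ω), DifferentiableAt ℝ ψ x :=
      ae_restrict_of_ae hψ.ae_differentiableAt
    filter_upwards [hdiff, ae_restrict_mem ho.measurableSet] with x hx hxΩ
    have hev : φ =ᶠ[𝓝 x] ψ := by
      filter_upwards [ho.mem_nhds hxΩ] with y hy
      rw [hψd, indicator_of_mem hy]
    rw [Fin.sum_univ_two, hev.fderiv_eq, hx.lineDeriv_eq_fderiv, hx.lineDeriv_eq_fderiv]
    ring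
  rw [E1, E2, ← E3] at key
  refine key.trans (le_of_eq ?_)
  push_cast
  ring

/-- **Theorem (distributional Jacobian of `S¹`-valued maps).** For `u ∈ W^{1,1}(Ω;S¹)`
there is a sequence of dipoles `(x_i,y_i)` in `cl(Ω)`, each with at least one point
in `Ω`, with `Σ d̄_Ω(x_i,y_i) < ∞`, such that
`⟨Det(∇u),φ⟩ = π Σ (φ(x_i) − φ(y_i))` for all `φ ∈ Lip₀(Ω)`. -/
theorem detJacobian_mem_X (Ω : Set R2) (hΩo : IsOpen Ω)
    (hΩb : Bornology.IsBounded Ω) (hΩc : IsConnected Ω) (hΩl : HasLipschitzBoundary Ω)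
    (u : R2 → R2) (G : R2 → Matrix (Fin 2) (Fin 2) ℝ)
    (hu : MemW11 Ω u G) (hS : SphereValued Ω u) :
    ∃ x y : ℕ → R2,
      (∀ i, x i ∈ closure Ω ∧ y i ∈ closure Ω ∧ x i ≠ y i ∧ (x i ∈ Ω ∨ y i ∈ Ω)) ∧
      Summable (fun i => dbar Ω (x i) (y i)) ∧
      ∀ φ : R2 → ℝ, MemLip0 Ω φ →
        Summable (fun i => |φ (x i) - φ (y i)|) ∧
        detPairing Ω u G φ = Real.pi * ∑' i, (φ (x i) - φ (y i)) := by
  exact assemble hΩo hΩb hΩc.nonempty (detPairing Ω u G) fun η hη => approx_R2 hΩo hΩb hu hS η hη
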